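/- The set of primes p such that p ≡ 1 (mod 16) and 2 is not a fourth power modulo p has natural density 1/16 in the set of all primes; that is, the limit as X → ∞ of #{p ≤ X : p prime, p ≡ 1 (mod 16), 2 is not a fourth power mod p} / #{p ≤ X : p prime} equals 1/16. -/

import Mathlib

open Filter

section
namespace QD
open MeasureTheory Topology Set

/-- Fejér type kernel. -/
noncomputable def fk (v : ℝ) : ℝ := ∫ w in (0:ℝ)..1, (1 - w) * Real.cos (w * v)

lemma fk_mul_sq (v : ℝ) : fk v * v ^ 2 = 1 - Real.cos v := by
  rcases eq_or_ne v 0 with rfl | hv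
  · simp
  have h : fk v = (1 - 1) * Real.sin (1 * v) / v - Real.cos (1 * v) / v ^ 2 -
      ((1 - 0) * Real.sin (0 * v) / v - Real.cos (0 * v) / v ^ 2) := by
    unfold fk
    refine intervalIntegral.integral_eq_sub_of_hasDerivAt
      (f := fun w => (1 - w) * Real.sin (w * v) / v - Real.cos (w * v) / v ^ 2) ?_ ?_
    · intro x _
      have h1 : HasDerivAt (fun w : ℝ => w * v) v x := by
        simpa using (hasDerivAt_id x).mul_const v
      have h2 := h1.sin
      have h3 := h1.cos
      have h4 : HasDerivAt (fun w : ℝ => 1 - w) (-1) x := by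
        simpa using (hasDerivAt_id x).const_sub 1
      have h5 := ((h4.mul h2).div_const v).sub (h3.div_const (v ^ 2))
      refine h5.congr_deriv ?_
      field_simp
      ring
    · apply Continuous.intervalIntegrable
      fun_prop
  rw [h]
  simp
  field_simp
  ring

lemma fk_cont : Continuous fk := by
  unfold fk
  apply intervalIntegral.continuous_parametric_intervalIntegral_of_continuous'
  fun_prop

lemma fk_zero : fk 0 = 1 / 2 := by
  unfold fk
  simp only [mul_zero, Real.cos_zero, mul_one]
  rw [intervalIntegral.integral_sub (by simp) (by simp)]
  simp only [intervalIntegral.integral_const, integral_id]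
  norm_num

lemma fk_nonneg (v : ℝ) : 0 ≤ fk v := by
  rcases eq_or_ne v 0 with rfl | hv
  · rw [fk_zero]; norm_num
  have := fk_mul_sq v
  have h2 : 0 < v ^ 2 := by positivity
  by_contra h
  push Not at h
  nlinarith [Real.cos_le_one v]

lemma fk_le_one (v : ℝ) : fk v ≤ 1 := by
  have h : ‖fk v‖ ≤ 1 * |1 - 0| := by
    apply intervalIntegral.norm_integral_le_of_norm_le_const
    intro x hx
    rw [uIoc_of_le zero_le_one] at hx
    rw [norm_mul]
    have h1 : ‖1 - x‖ ≤ 1 := by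
      rw [Real.norm_eq_abs, abs_le]; constructor <;> linarith [hx.1, hx.2]
    have h2 : ‖Real.cos (x * v)‖ ≤ 1 := Real.abs_cos_le_one _
    nlinarith [norm_nonneg (1 - x), norm_nonneg (Real.cos (x * v))]
  have := le_abs_self (fk v)
  rw [Real.norm_eq_abs] at h
  simp at h
  linarith

lemma fk_le (v : ℝ) : fk v ≤ 3 * (1 + v ^ 2)⁻¹ := by
  have h := fk_mul_sq v
  have h1 := fk_le_one v
  rw [← div_eq_mul_inv, le_div_iff₀ (by positivity)]
  nlinarith [Real.neg_one_le_cos v]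

lemma fk_integrable : Integrable fk := by
  refine (integrable_inv_one_add_sq.const_mul 3).mono' fk_cont.aestronglyMeasurable ?_
  filter_upwards with v
  rw [Real.norm_eq_abs, abs_of_nonneg (fk_nonneg v)]
  exact fk_le v

lemma fk_integral_pos : 0 < ∫ v, fk v := by
  rw [integral_pos_iff_support_of_nonneg fk_nonneg fk_integrable]
  apply IsOpen.measure_pos
  · exact fk_cont.isOpen_support
  · exact ⟨0, by rw [Function.mem_support, fk_zero]; norm_num⟩

/-- the finishing step -/
lemma taub_finish (A : ℝ → ℝ) (hm : Measurable A) (C c : ℝ) (hA0 : ∀ t, 0 ≤ A t)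
    (hAC : ∀ t, A t ≤ C) (hmono : ∀ t t', t ≤ t' → A t ≤ A t' * Real.exp (t' - t))
    (hlim : ∀ l : ℝ, 0 < l → Tendsto (fun y => ∫ v, A (y - v / l) * fk v) atTop
      (𝓝 (c * ∫ v, fk v))) : Tendsto A atTop (𝓝 c) := by
  set I := ∫ v, fk v with hI
  have hIpos : 0 < I := fk_integral_pos
  set J : ℝ → ℝ := fun R => ∫ v in Icc (-R) R, fk v with hJ
  have hJlim : Tendsto J atTop (𝓝 I) := by
    have := (aecover_Icc (μ := (volume : Measure ℝ)) tendsto_neg_atTop_atBot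
      (tendsto_id (α := ℝ) (x := atTop))).integral_tendsto_of_countably_generated fk_integrable
    exact this
  have hexp : Tendsto (fun R : ℝ => Real.exp (2 / R)) atTop (𝓝 1) := by
    have : Tendsto (fun R : ℝ => 2 / R) atTop (𝓝 0) := tendsto_const_nhds.div_atTop tendsto_id
    simpa using this.rexp
  have hInteg : ∀ y l : ℝ, Integrable (fun v => A (y - v / l) * fk v) := by
    intro y l
    refine (fk_integrable.const_mul C).mono' ?_ ?_
    · apply Measurable.aestronglyMeasurable
      have := fk_cont.measurable
      fun_prop
    · filter_upwards with v
      rw [norm_mul, Real.norm_eq_abs, Real.norm_eq_abs, abs_of_nonneg (fk_nonneg v),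
        abs_of_nonneg (hA0 _)]
      exact mul_le_mul_of_nonneg_right (hAC _) (fk_nonneg v)
  have hC0 : 0 ≤ C := (hA0 0).trans (hAC 0)
  -- upper
  have up : ∀ R : ℝ, 0 < R → ∀ t, A t * (Real.exp (-(2 / R)) * J R) ≤
      ∫ v, A ((t + 1 / R) - v / R ^ 2) * fk v := by
    intro R hR t
    calc A t * (Real.exp (-(2 / R)) * J R)
        = ∫ v in Icc (-R) R, A t * Real.exp (-(2 / R)) * fk v := by
          rw [integral_const_mul]; ring
      _ ≤ ∫ v in Icc (-R) R, A ((t + 1 / R) - v / R ^ 2) * fk v := by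
          apply setIntegral_mono_on
          · exact (fk_integrable.const_mul _).integrableOn
          · exact (hInteg _ _).integrableOn
          · exact measurableSet_Icc
          intro v hv
          apply mul_le_mul_of_nonneg_right _ (fk_nonneg v)
          have e1 : v / R ^ 2 ≤ 1 / R := by
            rw [div_le_div_iff₀ (by positivity) hR]; nlinarith [hv.2]
          have e2 : -(1 / R) ≤ v / R ^ 2 := by
            rw [← neg_div, div_le_div_iff₀ hR (by positivity)]; nlinarith [hv.1]
          have := hmono t ((t + 1 / R) - v / R ^ 2) (by linarith)
          have e3 : Real.exp ((t + 1 / R) - v / R ^ 2 - t) ≤ Real.exp (2 / R) := by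
            apply Real.exp_le_exp.mpr
            have : 2 / R = 1 / R + 1 / R := by ring
            linarith
          rw [Real.exp_neg, ← div_eq_mul_inv, div_le_iff₀ (Real.exp_pos _)]
          exact this.trans (mul_le_mul_of_nonneg_left e3 (hA0 _))
      _ ≤ _ := by
          apply setIntegral_le_integral (hInteg _ _)
          filter_upwards with v
          exact mul_nonneg (hA0 _) (fk_nonneg v)
  have lo : ∀ R : ℝ, 0 < R → ∀ t, ∫ v, A ((t - 1 / R) - v / R ^ 2) * fk v ≤
      A t * (Real.exp (2 / R) * J R) + C * (I - J R) := by
    intro R hR t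
    rw [← integral_add_compl (s := Icc (-R) R) measurableSet_Icc (hInteg _ _)]
    apply add_le_add
    · calc ∫ v in Icc (-R) R, A ((t - 1 / R) - v / R ^ 2) * fk v
        _ ≤ ∫ v in Icc (-R) R, A t * Real.exp (2 / R) * fk v := by
          apply setIntegral_mono_on
          · exact (hInteg _ _).integrableOn
          · exact (fk_integrable.const_mul _).integrableOn
          · exact measurableSet_Icc
          intro v hv
          apply mul_le_mul_of_nonneg_right _ (fk_nonneg v)
          have e1 : v / R ^ 2 ≤ 1 / R := by
            rw [div_le_div_iff₀ (by positivity) hR]; nlinarith [hv.2]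
          have e2 : -(1 / R) ≤ v / R ^ 2 := by
            rw [← neg_div, div_le_div_iff₀ hR (by positivity)]; nlinarith [hv.1]
          refine (hmono ((t - 1 / R) - v / R ^ 2) t (by linarith)).trans ?_
          apply mul_le_mul_of_nonneg_left _ (hA0 _)
          apply Real.exp_le_exp.mpr
          have : 2 / R = 1 / R + 1 / R := by ring
          linarith
        _ = _ := by rw [integral_const_mul]; ring
    · calc ∫ v in (Icc (-R) R)ᶜ, A ((t - 1 / R) - v / R ^ 2) * fk v
        _ ≤ ∫ v in (Icc (-R) R)ᶜ, C * fk v := by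
          apply setIntegral_mono_on
          · exact (hInteg _ _).integrableOn
          · exact (fk_integrable.const_mul _).integrableOn
          · exact measurableSet_Icc.compl
          intro v hv
          exact mul_le_mul_of_nonneg_right (hAC _) (fk_nonneg v)
        _ = _ := by
          rw [integral_const_mul, setIntegral_compl measurableSet_Icc fk_integrable]
  rw [tendsto_order]
  constructor
  · intro a ha
    have h1 : Tendsto (fun R => (c * I - C * (I - J R)) / (Real.exp (2 / R) * J R)) atTop
        (𝓝 ((c * I - C * (I - I)) / (1 * I))) := by
      apply Tendsto.div _ (hexp.mul hJlim) (by positivity)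
      exact tendsto_const_nhds.sub (tendsto_const_nhds.mul (tendsto_const_nhds.sub hJlim))
    rw [show (c * I - C * (I - I)) / (1 * I) = c by field_simp; ring] at h1
    obtain ⟨R, hRa, hRJ, hR⟩ := ((h1.eventually_const_lt ha).and
      ((hJlim.eventually_const_lt hIpos).and (eventually_gt_atTop 0))).exists
    have h2 : Tendsto (fun t => ((∫ v, A ((t - 1 / R) - v / R ^ 2) * fk v) - C * (I - J R)) /
        (Real.exp (2 / R) * J R)) atTop
        (𝓝 ((c * I - C * (I - J R)) / (Real.exp (2 / R) * J R))) := by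
      apply Tendsto.div_const
      apply Tendsto.sub_const
      exact (hlim (R ^ 2) (by positivity)).comp (tendsto_atTop_add_const_right _ _ tendsto_id)
    filter_upwards [h2.eventually_const_lt hRa] with t ht
    refine ht.trans_le ?_
    rw [div_le_iff₀ (mul_pos (Real.exp_pos _) hRJ)]
    linarith [lo R hR t]
  · intro a ha
    have h1 : Tendsto (fun R => (c * I) / (Real.exp (-(2 / R)) * J R)) atTop
        (𝓝 ((c * I) / (1⁻¹ * I))) := by
      apply Tendsto.div tendsto_const_nhds _ (by positivity)
      simp_rw [Real.exp_neg]
      exact (hexp.inv₀ one_ne_zero).mul hJlim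
    rw [show (c * I) / (1⁻¹ * I) = c by field_simp] at h1
    obtain ⟨R, hRa, hRJ, hR⟩ := ((h1.eventually_lt_const ha).and
      ((hJlim.eventually_const_lt hIpos).and (eventually_gt_atTop 0))).exists
    have h2 : Tendsto (fun t => (∫ v, A ((t + 1 / R) - v / R ^ 2) * fk v) /
        (Real.exp (-(2 / R)) * J R)) atTop
        (𝓝 ((c * I) / (Real.exp (-(2 / R)) * J R))) := by
      apply Tendsto.div_const
      exact (hlim (R ^ 2) (by positivity)).comp (tendsto_atTop_add_const_right _ _ tendsto_id)
    filter_upwards [h2.eventually_lt_const hRa] with t ht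
    refine lt_of_le_of_lt ?_ ht
    rw [le_div_iff₀ (mul_pos (Real.exp_pos _) hRJ)]
    exact up R hR t

end QD
namespace QD
open MeasureTheory Topology Set

lemma fk_eq_re (x : ℝ) : fk x =
    (∫ w in Ioc (0:ℝ) 1, ((1 - w : ℝ) : ℂ) * Complex.exp (Complex.I * (w * x : ℝ))).re := by
  have hInteg : Integrable (fun w : ℝ => ((1 - w : ℝ) : ℂ) * Complex.exp (Complex.I * (w * x : ℝ)))
      (volume.restrict (Ioc (0:ℝ) 1)) := by
    apply Continuous.integrableOn_Ioc
    fun_prop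
  have := integral_re hInteg
  simp only [RCLike.re_eq_complex_re] at this
  rw [← this]
  unfold fk
  rw [intervalIntegral.integral_of_le zero_le_one]
  apply integral_congr_ae
  filter_upwards with w
  rw [Complex.re_ofReal_mul, mul_comm Complex.I, Complex.exp_ofReal_mul_I_re]

lemma taub_swap (A : ℝ → ℝ) (hm : Measurable A) (C c : ℝ) (hA0 : ∀ t, 0 ≤ A t)
    (hAC : ∀ t, A t ≤ C) (H : ℂ → ℂ)
    (hL : ∀ z : ℂ, 0 < z.re →
      ∫ t in Ioi (0:ℝ), ((A t - c : ℝ) : ℂ) * Complex.exp (-z * t) = H z)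
    (l y d : ℝ) (hd : 0 < d) :
    ∫ t in Ioi (0:ℝ), (A t - c) * Real.exp (-d * t) * fk (l * (y - t)) =
    (∫ w in Ioc (0:ℝ) 1, ((1 - w : ℝ) : ℂ) * Complex.exp (Complex.I * (l * y * w : ℝ)) *
      H (d + Complex.I * (l * w : ℝ))).re := by
  have hC0 : 0 ≤ C := (hA0 0).trans (hAC 0)
  have hbd : ∀ t, |A t - c| ≤ C + |c| := by
    intro t
    have := abs_sub (A t) c
    rw [abs_of_nonneg (hA0 t)] at this
    linarith [hAC t]
  have hexpint : IntegrableOn (fun t : ℝ => (C + |c|) * Real.exp (-d * t)) (Ioi 0) :=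
    (exp_neg_integrableOn_Ioi 0 hd).const_mul _
  let F : ℝ → ℝ → ℂ := fun w t => ((1 - w : ℝ) : ℂ) * Complex.exp (Complex.I * (l * y * w : ℝ)) *
      (((A t - c : ℝ) : ℂ) * Complex.exp (-(d + Complex.I * (l * w : ℝ)) * t))
  have hFint : Integrable (Function.uncurry F)
      ((volume.restrict (Ioc (0:ℝ) 1)).prod (volume.restrict (Ioi (0:ℝ)))) := by
    have h1 : Integrable (fun w : ℝ => (1:ℝ)) (volume.restrict (Ioc (0:ℝ) 1)) := by
      simp
    refine (h1.mul_prod hexpint).mono' ?_ ?_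
    · apply Measurable.aestronglyMeasurable
      unfold F Function.uncurry
      fun_prop
    · rw [Measure.prod_restrict]
      filter_upwards [ae_restrict_mem (measurableSet_Ioc.prod measurableSet_Ioi)] with p hp
      obtain ⟨⟨hp1, hp2⟩, hp3⟩ := hp
      simp only [Function.uncurry, F, norm_mul, Complex.norm_real, Complex.norm_exp]
      have e1 : (Complex.I * ((l * y * p.1 : ℝ) : ℂ)).re = 0 := by simp
      have e2 : (-((d:ℂ) + Complex.I * ((l * p.1 : ℝ) : ℂ)) * (p.2:ℂ)).re = -d * p.2 := by simp
      rw [e1, e2, Real.exp_zero, mul_one, one_mul]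
      have h2 : ‖1 - p.1‖ ≤ 1 := by
        rw [Real.norm_eq_abs, abs_le]; constructor <;> linarith
      calc _ ≤ 1 * (‖A p.2 - c‖ * Real.exp (-d * p.2)) := by gcongr
        _ ≤ _ := by rw [one_mul]; gcongr; exact hbd _
  have hsw := integral_integral_swap hFint
  have e1 : ∀ w : ℝ, ((1 - w : ℝ) : ℂ) * Complex.exp (Complex.I * (l * y * w : ℝ)) *
      H (d + Complex.I * (l * w : ℝ)) = ∫ t in Ioi (0:ℝ), F w t := by
    intro w
    rw [← hL _ (by simpa using hd), ← integral_const_mul]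
  simp_rw [e1]
  rw [hsw]
  have hint2 := hFint.integral_prod_right
  have := integral_re hint2
  simp only [RCLike.re_eq_complex_re] at this
  simp only [Function.uncurry] at this
  rw [← this]
  apply integral_congr_ae
  filter_upwards with t
  have e3 : ∀ w : ℝ, F w t = (((A t - c) * Real.exp (-d * t) : ℝ) : ℂ) *
      (((1 - w : ℝ) : ℂ) * Complex.exp (Complex.I * (w * (l * (y - t)) : ℝ))) := by
    intro w
    have : Complex.exp (Complex.I * (l * y * w : ℝ)) *
      Complex.exp (-(d + Complex.I * (l * w : ℝ)) * t) =
      Complex.exp ((-d * t : ℝ)) * Complex.exp (Complex.I * (w * (l * (y - t)) : ℝ)) := by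
      rw [← Complex.exp_add, ← Complex.exp_add]
      congr 1
      push_cast
      ring
    simp only [F]
    rw [Complex.ofReal_mul ((A t - c)), Complex.ofReal_exp]
    linear_combination ((1 - w : ℝ) : ℂ) * ((A t - c : ℝ) : ℂ) * this
  simp_rw [e3]
  rw [integral_const_mul, Complex.re_ofReal_mul, ← fk_eq_re]

lemma fk_comp_integrable (l y : ℝ) (hl : 0 < l) : Integrable (fun t => fk (l * (y - t))) := by
  have h1 : Integrable (fun t => fk (l * t)) := fk_integrable.comp_mul_left' hl.ne'
  exact h1.comp_sub_left y

lemma taub_limit (A : ℝ → ℝ) (hm : Measurable A) (C c : ℝ) (hA0 : ∀ t, 0 ≤ A t)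
    (hAC : ∀ t, A t ≤ C) (H : ℂ → ℂ) (hH : ContinuousOn H {z | 0 ≤ z.re})
    (hL : ∀ z : ℂ, 0 < z.re →
      ∫ t in Ioi (0:ℝ), ((A t - c : ℝ) : ℂ) * Complex.exp (-z * t) = H z)
    (l y : ℝ) (hl : 0 < l) :
    ∫ t in Ioi (0:ℝ), (A t - c) * fk (l * (y - t)) =
    (∫ w in Ioc (0:ℝ) 1, ((1 - w : ℝ) : ℂ) * Complex.exp (Complex.I * (l * y * w : ℝ)) *
      H (Complex.I * (l * w : ℝ))).re := by
  have hbd : ∀ t, |A t - c| ≤ C + |c| := by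
    intro t
    have := abs_sub (A t) c
    rw [abs_of_nonneg (hA0 t)] at this
    linarith [hAC t]
  have T1 : Tendsto (fun d : ℝ => ∫ t in Ioi (0:ℝ), (A t - c) * Real.exp (-d * t) *
      fk (l * (y - t))) (𝓝[>] 0) (𝓝 (∫ t in Ioi (0:ℝ), (A t - c) * fk (l * (y - t)))) := by
    apply tendsto_integral_filter_of_dominated_convergence
      (fun t => (C + |c|) * fk (l * (y - t)))
    · filter_upwards with d
      apply Measurable.aestronglyMeasurable
      have := fk_cont.measurable
      fun_prop
    · filter_upwards [self_mem_nhdsWithin] with d hd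
      filter_upwards [ae_restrict_mem measurableSet_Ioi] with t ht
      rw [norm_mul, norm_mul, Real.norm_eq_abs (fk _), abs_of_nonneg (fk_nonneg _)]
      apply mul_le_mul_of_nonneg_right _ (fk_nonneg _)
      rw [Real.norm_eq_abs, Real.norm_eq_abs, Real.abs_exp]
      have h1 : Real.exp (-d * t) ≤ 1 := by
        apply Real.exp_le_one_iff.mpr
        have : 0 < d * t := mul_pos hd ht
        linarith
      calc _ ≤ |A t - c| * 1 := by gcongr
        _ ≤ _ := by rw [mul_one]; exact hbd t
    · exact ((fk_comp_integrable l y hl).const_mul _).integrableOn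
    · filter_upwards with t
      apply tendsto_nhdsWithin_of_tendsto_nhds
      have : Continuous (fun d : ℝ => (A t - c) * Real.exp (-d * t) * fk (l * (y - t))) := by
        fun_prop
      simpa using this.tendsto 0
  obtain ⟨B, hB⟩ : ∃ B, ∀ z ∈ (Icc (0:ℝ) 1) ×ℂ (Icc (0:ℝ) l), ‖H z‖ ≤ B := by
    apply IsCompact.exists_bound_of_continuousOn
    · exact isCompact_Icc.reProdIm isCompact_Icc
    · apply hH.mono
      intro z hz
      exact hz.1.1
  have T2 : Tendsto (fun d : ℝ => (∫ w in Ioc (0:ℝ) 1, ((1 - w : ℝ) : ℂ) *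
      Complex.exp (Complex.I * (l * y * w : ℝ)) * H (d + Complex.I * (l * w : ℝ))))
      (𝓝[>] 0) (𝓝 (∫ w in Ioc (0:ℝ) 1, ((1 - w : ℝ) : ℂ) *
      Complex.exp (Complex.I * (l * y * w : ℝ)) * H (Complex.I * (l * w : ℝ)))) := by
    apply tendsto_integral_filter_of_dominated_convergence (fun _ => B)
    · filter_upwards [self_mem_nhdsWithin] with d hd
      apply Continuous.aestronglyMeasurable
      apply Continuous.mul (by fun_prop)
      apply hH.comp_continuous (by fun_prop)
      intro w
      simpa using (le_of_lt hd)
    · filter_upwards [self_mem_nhdsWithin, Ioc_mem_nhdsGT (show (0:ℝ) < 1 by norm_num)]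
        with d hd hd1
      filter_upwards [ae_restrict_mem measurableSet_Ioc] with w hw
      rw [norm_mul, norm_mul, Complex.norm_real, Complex.norm_exp]
      have e1 : (Complex.I * ((l * y * w : ℝ) : ℂ)).re = 0 := by simp
      rw [e1, Real.exp_zero, mul_one]
      have h2 : ‖1 - w‖ ≤ 1 := by
        rw [Real.norm_eq_abs, abs_le]; constructor <;> linarith [hw.1, hw.2]
      have h3 : ‖H (d + Complex.I * (l * w : ℝ))‖ ≤ B := by
        apply hB
        rw [Complex.mem_reProdIm]
        constructor
        · simpa using ⟨hd1.1.le, hd1.2⟩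
        · simp
          constructor
          · nlinarith [hw.1]
          · nlinarith [hw.2]
      calc _ ≤ 1 * ‖H (d + Complex.I * (l * w : ℝ))‖ := by gcongr
        _ ≤ B := by rw [one_mul]; exact h3
    · simp
    · filter_upwards with w
      apply Tendsto.const_mul
      have hc : ContinuousWithinAt H {z | 0 ≤ z.re} (Complex.I * (l * w : ℝ)) := by
        apply hH
        simp
      apply hc.tendsto.comp
      rw [tendsto_nhdsWithin_iff]
      constructor
      · apply tendsto_nhdsWithin_of_tendsto_nhds
        have : Continuous (fun d : ℝ => (d : ℂ) + Complex.I * (l * w : ℝ)) := by fun_prop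
        simpa using this.tendsto 0
      · filter_upwards [self_mem_nhdsWithin] with d hd
        simpa using (le_of_lt hd)
  have T3 := (Complex.continuous_re.tendsto _).comp T2
  refine tendsto_nhds_unique_of_eventuallyEq T1 T3 ?_
  filter_upwards [self_mem_nhdsWithin] with d hd
  exact taub_swap A hm C c hA0 hAC H hL l y d hd

lemma taub (A : ℝ → ℝ) (hm : Measurable A) (C c : ℝ) (hA0 : ∀ t, 0 ≤ A t)
    (hneg : ∀ t ≤ 0, A t = 0)
    (hAC : ∀ t, A t ≤ C) (hmono : ∀ t t', t ≤ t' → A t ≤ A t' * Real.exp (t' - t))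
    (H : ℂ → ℂ) (hH : ContinuousOn H {z | 0 ≤ z.re})
    (hL : ∀ z : ℂ, 0 < z.re →
      ∫ t in Ioi (0:ℝ), ((A t - c : ℝ) : ℂ) * Complex.exp (-z * t) = H z) :
    Tendsto A atTop (𝓝 c) := by
  apply taub_finish A hm C c hA0 hAC hmono
  intro l hl
  have hbd : ∀ t, |A t - c| ≤ C + |c| := by
    intro t
    have := abs_sub (A t) c
    rw [abs_of_nonneg (hA0 t)] at this
    linarith [hAC t]
  -- Riemann-Lebesgue
  have RL : Tendsto (fun y : ℝ => ∫ t in Ioi (0:ℝ), (A t - c) * fk (l * (y - t))) atTop (𝓝 0) := by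
    simp_rw [fun y => taub_limit A hm C c hA0 hAC H hH hL l y hl]
    have h1 := Real.tendsto_integral_exp_smul_cocompact
      ((Ioc (0:ℝ) 1).indicator (fun w : ℝ => ((1 - w : ℝ) : ℂ) * H (Complex.I * (l * w : ℝ))))
    have h2 : Tendsto (fun y : ℝ => -(l / (2 * Real.pi)) * y) atTop (cocompact ℝ) := by
      have : Tendsto (fun y : ℝ => -(l / (2 * Real.pi)) * y) atTop atBot := by
        apply Tendsto.const_mul_atTop_of_neg _ tendsto_id
        have : 0 < l / (2 * Real.pi) := by positivity
        linarith
      exact this.mono_right atBot_le_cocompact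
    have h3 := (Complex.continuous_re.tendsto _).comp (h1.comp h2)
    rw [Complex.zero_re] at h3
    refine h3.congr ?_
    intro y
    simp only [Function.comp]
    congr 1
    rw [← integral_indicator measurableSet_Ioc]
    congr 1
    ext w
    by_cases hw : w ∈ Ioc (0:ℝ) 1
    · rw [indicator_of_mem hw, indicator_of_mem hw, Circle.smul_def, Real.fourierChar_apply]
      rw [smul_eq_mul]
      have : Complex.exp (↑(2 * Real.pi * -(w * (-(l / (2 * Real.pi)) * y))) * Complex.I) =
        Complex.exp (Complex.I * (l * y * w : ℝ)) := by
        congr 1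
        rw [mul_comm]
        congr 2
        have := Real.pi_pos
        field_simp
      rw [this]
      ring
    · rw [indicator_of_notMem hw, indicator_of_notMem hw, smul_zero]
  -- constant part
  have CP : Tendsto (fun y : ℝ => ∫ v, (if 0 < y - v / l then c else 0) * fk v) atTop
      (𝓝 (∫ v, c * fk v)) := by
    apply tendsto_integral_filter_of_dominated_convergence (fun v => |c| * fk v)
    · filter_upwards with y
      apply Measurable.aestronglyMeasurable
      have := fk_cont.measurable
      apply Measurable.mul _ this
      apply Measurable.ite _ measurable_const measurable_const
      apply measurableSet_lt measurable_const (by fun_prop)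
    · filter_upwards with y
      filter_upwards with v
      rw [norm_mul, Real.norm_eq_abs (fk _), abs_of_nonneg (fk_nonneg _)]
      apply mul_le_mul_of_nonneg_right _ (fk_nonneg _)
      split_ifs <;> simp
    · exact fk_integrable.const_mul _
    · filter_upwards with v
      apply tendsto_const_nhds.congr'
      filter_upwards [eventually_gt_atTop (v / l)] with y hy
      rw [if_pos (by linarith)]
  rw [← integral_const_mul]
  have := (RL.const_mul l).add CP
  rw [mul_zero, zero_add] at this
  refine this.congr ?_
  intro y
  set D : ℝ → ℝ := (Ioi (0:ℝ)).indicator (fun t => A t - c) with hD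
  have hDm : Measurable D := (hm.sub_const c).indicator measurableSet_Ioi
  have hDbd : ∀ t, ‖D t‖ ≤ C + |c| := by
    intro t
    rw [hD]
    refine (norm_indicator_le_norm_self _ _).trans ?_
    exact hbd t
  have e1 : l * ∫ t in Ioi (0:ℝ), (A t - c) * fk (l * (y - t)) = ∫ v, D (y - v / l) * fk v := by
    have s1 : ∫ t in Ioi (0:ℝ), (A t - c) * fk (l * (y - t)) = ∫ t, D t * fk (l * (y - t)) := by
      rw [← integral_indicator measurableSet_Ioi]
      congr 1
      ext t
      simp only [hD, indicator]
      split_ifs <;> simp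
    rw [s1]
    have s2 := Measure.integral_comp_mul_left (fun v => D (y - v / l) * fk v) l
    have s3 : ∫ t, D t * fk (l * (y - t)) = ∫ x, D (y - (l * x) / l) * fk (l * x) := by
      rw [← integral_sub_left_eq_self (fun t => D t * fk (l * (y - t))) volume y]
      congr 1
      ext x
      rw [mul_div_cancel_left₀ _ hl.ne']
      congr 2
      ring
    rw [s3, s2, smul_eq_mul, abs_of_pos (by positivity), ← mul_assoc, mul_inv_cancel₀ hl.ne',
      one_mul]
  rw [e1, ← integral_add]
  · congr 1
    ext v
    rw [← add_mul]
    congr 1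
    simp only [hD, indicator, mem_Ioi]
    split_ifs with h
    · ring
    · rw [hneg _ (not_lt.mp h)]; ring
  · refine (fk_integrable.const_mul (C + |c|)).mono' ?_ ?_
    · apply Measurable.aestronglyMeasurable
      have := fk_cont.measurable
      fun_prop
    · filter_upwards with v
      rw [norm_mul, Real.norm_eq_abs (fk _), abs_of_nonneg (fk_nonneg _)]
      exact mul_le_mul_of_nonneg_right (hDbd _) (fk_nonneg _)
  · refine (fk_integrable.const_mul (|c|)).mono' ?_ ?_
    · apply Measurable.aestronglyMeasurable
      have := fk_cont.measurable
      apply Measurable.mul _ this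
      apply Measurable.ite _ measurable_const measurable_const
      apply measurableSet_lt measurable_const (by fun_prop)
    · filter_upwards with v
      rw [norm_mul, Real.norm_eq_abs (fk _), abs_of_nonneg (fk_nonneg _)]
      apply mul_le_mul_of_nonneg_right _ (fk_nonneg _)
      split_ifs <;> simp

end QD
namespace QD
open MeasureTheory Topology Set

/-- A Wiener–Ikehara theorem with an a priori Chebyshev bound. -/
theorem wiener_ikehara (u : ℕ → ℝ) (hu : ∀ n, 0 ≤ u n) (C : ℝ)
    (hC : ∀ n : ℕ, ∑ k ∈ Finset.Icc 1 n, u k ≤ C * n) (c : ℝ) (G : ℂ → ℂ)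
    (hG : ContinuousOn G {s | 1 ≤ s.re})
    (h : ∀ s : ℂ, 1 < s.re → LSeries (fun n => (u n : ℂ)) s = c / (s - 1) + G s) :
    Tendsto (fun n : ℕ => (∑ k ∈ Finset.Icc 1 n, u k) / n) atTop (𝓝 c) := by
  set S : ℝ → ℝ := fun x => ∑ k ∈ Finset.Icc 1 ⌊x⌋₊, u k with hS
  have hS0 : ∀ x, 0 ≤ S x := fun x => Finset.sum_nonneg fun k _ => hu k
  have hSmono : Monotone S := by
    intro x y hxy
    apply Finset.sum_le_sum_of_subset_of_nonneg
    · exact Finset.Icc_subset_Icc_right (Nat.floor_mono hxy)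
    · intro i _ _; exact hu i
  have hC0 : 0 ≤ C := by
    have := hC 1
    simp at this
    exact (hu 1).trans this
  have hSC : ∀ x, 0 ≤ x → S x ≤ C * x := by
    intro x hx
    exact (hC _).trans (mul_le_mul_of_nonneg_left (Nat.floor_le hx) hC0)
  set A : ℝ → ℝ := fun t => if t ≤ 0 then 0 else S (Real.exp t) * Real.exp (-t) with hA
  have hApos : ∀ t, 0 < t → A t = S (Real.exp t) * Real.exp (-t) := fun t ht => by
    simp [hA, not_le.mpr ht]
  have hneg : ∀ t ≤ 0, A t = 0 := fun t ht => by simp [hA, ht]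
  have hA0 : ∀ t, 0 ≤ A t := by
    intro t
    simp only [hA]
    split_ifs
    · exact le_rfl
    · exact mul_nonneg (hS0 _) (Real.exp_pos _).le
  have hAC : ∀ t, A t ≤ C := by
    intro t
    simp only [hA]
    split_ifs
    · exact hC0
    · rw [Real.exp_neg, ← div_eq_mul_inv, div_le_iff₀ (Real.exp_pos _)]
      exact hSC _ (Real.exp_pos _).le
  have hAm : Measurable A := by
    apply Measurable.ite measurableSet_Iic measurable_const
    have := hSmono.measurable
    fun_prop
  have hmono : ∀ t t', t ≤ t' → A t ≤ A t' * Real.exp (t' - t) := by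
    intro t t' htt
    rcases le_or_gt t 0 with ht | ht
    · rw [hneg t ht]; exact mul_nonneg (hA0 _) (Real.exp_pos _).le
    · rw [hApos t ht, hApos t' (ht.trans_le htt), mul_assoc, ← Real.exp_add]
      rw [show -t' + (t' - t) = -t by ring]
      exact mul_le_mul_of_nonneg_right (hSmono (Real.exp_le_exp.mpr htt)) (Real.exp_pos _).le
  have hbig : (fun n : ℕ ↦ ∑ k ∈ Finset.Icc 1 n, u k) =O[atTop] fun n ↦ (n : ℝ) ^ (1:ℝ) := by
    apply Asymptotics.IsBigO.of_bound C
    filter_upwards with n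
    rw [Real.rpow_one, Real.norm_eq_abs, abs_of_nonneg (Finset.sum_nonneg fun k _ => hu k)]
    simpa using hC n
  have hexpimg : Real.exp '' Ioi 0 = Ioi 1 := by
    ext x
    constructor
    · rintro ⟨t, ht, rfl⟩
      exact Real.one_lt_exp_iff.mpr ht
    · intro hx
      exact ⟨Real.log x, Real.log_pos hx, Real.exp_log (by linarith [mem_Ioi.mp hx])⟩
  have hL : ∀ z : ℂ, 0 < z.re →
      ∫ t in Ioi (0:ℝ), ((A t - c : ℝ) : ℂ) * Complex.exp (-z * t) = (G (1 + z) - c) / (1 + z) := by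
    intro z hz
    have hz0 : z ≠ 0 := by rintro rfl; simp at hz
    have hz1 : 1 + z ≠ 0 := by
      intro h0
      have := congrArg Complex.re h0
      simp at this
      linarith
    have i1 : IntegrableOn (fun t : ℝ => Complex.exp (-z * t)) (Ioi 0) :=
      integrableOn_exp_mul_complex_Ioi (by simpa using hz) 0
    have i2 : IntegrableOn (fun t : ℝ => (A t : ℂ) * Complex.exp (-z * t)) (Ioi 0) := by
      refine Integrable.bdd_mul i1 (c := C) ?_ ?_
      · apply Measurable.aestronglyMeasurable
        fun_prop
      · filter_upwards with t
        rw [Complex.norm_real, Real.norm_eq_abs, abs_of_nonneg (hA0 t)]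
        exact hAC t
    have e1 : ∫ t in Ioi (0:ℝ), Complex.exp (-z * t) = 1 / z := by
      rw [integral_exp_mul_complex_Ioi (by simpa using hz)]
      simp
    have e2 : ∫ t in Ioi (0:ℝ), (A t : ℂ) * Complex.exp (-z * t) =
        LSeries (fun n => (u n : ℂ)) (1 + z) / (1 + z) := by
      rw [LSeries_eq_mul_integral_of_nonneg u zero_le_one (by simpa using hz) hbig hu,
        mul_div_cancel_left₀ _ hz1, ← hexpimg]
      rw [integral_image_eq_integral_abs_deriv_smul measurableSet_Ioi
        (fun x _ => (Real.hasDerivAt_exp x).hasDerivWithinAt) Real.exp_injective.injOn]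
      apply setIntegral_congr_fun measurableSet_Ioi
      intro t ht
      simp only
      rw [hApos t ht, Real.abs_exp, Complex.real_smul, ← Complex.ofReal_sum]
      rw [Complex.cpow_def_of_ne_zero (by exact_mod_cast (Real.exp_pos t).ne'),
        ← Complex.ofReal_log (Real.exp_pos t).le, Real.log_exp]
      simp only [hS]
      push_cast
      have : Complex.exp (-(t:ℂ)) * Complex.exp (-z * t) =
        Complex.exp t * Complex.exp (t * -(1 + z + 1)) := by
        rw [← Complex.exp_add, ← Complex.exp_add]
        congr 1
        ring
      rw [mul_assoc, this]
      ring
    have e3 : ∀ t : ℝ, ((A t - c : ℝ) : ℂ) * Complex.exp (-z * t) =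
        (A t : ℂ) * Complex.exp (-z * t) - c * Complex.exp (-z * t) := by
      intro t; push_cast; ring
    simp_rw [e3]
    rw [integral_sub i2 (i1.const_mul _), integral_const_mul, e1, e2, h _ (by simpa using hz)]
    rw [add_sub_cancel_left]
    field_simp
    ring
  have hH : ContinuousOn (fun z : ℂ => (G (1 + z) - c) / (1 + z)) {z | 0 ≤ z.re} := by
    apply ContinuousOn.div
    · apply ContinuousOn.sub _ continuousOn_const
      apply hG.comp (by fun_prop)
      intro z hz
      simpa using hz
    · fun_prop
    · intro z hz h0
      have := congrArg Complex.re h0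
      simp at this
      have : 0 ≤ z.re := hz
      linarith
  have T := taub A hAm C c hA0 hneg hAC hmono _ hH hL
  have T2 : Tendsto (fun n : ℕ => Real.log n) atTop atTop :=
    Real.tendsto_log_atTop.comp tendsto_natCast_atTop_atTop
  refine (T.comp T2).congr' ?_
  filter_upwards [eventually_gt_atTop 1] with n hn
  have hn' : (1:ℝ) < n := by exact_mod_cast hn
  simp only [Function.comp]
  rw [hApos _ (Real.log_pos hn'), Real.exp_neg, Real.exp_log (by linarith)]
  simp only [hS, Nat.floor_natCast]
  rw [div_eq_mul_inv]

end QD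

end

section
namespace QD

lemma fourth_iff {p : ℕ} [Fact p.Prime] (hp : p % 8 = 1) :
    (∃ w : ZMod p, w ^ 4 = 2) ↔ (2 : ZMod p) ^ (p / 4) = 1 := by
  have hpp : p.Prime := Fact.out
  have h2 : (2 : ZMod p) ≠ 0 := by
    intro h
    have : ((2:ℕ) : ZMod p) = 0 := by exact_mod_cast h
    rw [ZMod.natCast_eq_zero_iff] at this
    have := Nat.le_of_dvd (by norm_num) this
    have := hpp.two_le
    interval_cases p; omega
  constructor
  · rintro ⟨w, hw⟩
    rw [← hw, ← pow_mul]
    have hw0 : w ≠ 0 := by rintro rfl; simp at hw; exact h2 hw.symm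
    have : 4 * (p / 4) = p - 1 := by omega
    rw [this]
    exact ZMod.pow_card_sub_one_eq_one hw0
  · intro h
    obtain ⟨s, hs⟩ := (ZMod.exists_sq_eq_two_iff (p := p) (by rintro rfl; omega)).2 (Or.inl hp)
    have hs0 : s ≠ 0 := by rintro rfl; simp at hs; exact h2 hs
    have h3 : s ^ (p / 2) = 1 := by
      have : p / 2 = 2 * (p / 4) := by omega
      rw [this, pow_mul, pow_two, ← hs, h]
    obtain ⟨r, hr⟩ := (ZMod.euler_criterion p hs0).2 h3
    exact ⟨r, by rw [hs, hr]; ring⟩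

theorem quartic {p : ℕ} [Fact p.Prime] (hp : p % 8 = 1) (X Y : ℕ) (hXY : X ^ 2 + Y ^ 2 = p)
    (hX : X % 2 = 1) (hY : Y % 4 = 0) :
    (∃ w : ZMod p, w ^ 4 = 2) ↔ Y % 8 = 0 := by
  have hpp : p.Prime := Fact.out
  rw [fourth_iff hp]
  have hcop : Nat.Coprime X Y := by
    rw [← Nat.isCoprime_iff_coprime]
    by_contra hc
    rw [Nat.isCoprime_iff_coprime] at hc
    obtain ⟨q, hq, h1, h2⟩ := Nat.Prime.not_coprime_iff_dvd.1 hc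
    have h3 : q ^ 2 ∣ p := by
      rw [← hXY]; exact dvd_add (pow_dvd_pow_of_dvd h1 2) (pow_dvd_pow_of_dvd h2 2)
    have h4 : q ∣ p := (dvd_pow_self q two_ne_zero).trans h3
    have h5 := (Nat.prime_dvd_prime_iff_eq hq hpp).1 h4
    subst h5
    have h6 := Nat.le_of_dvd hpp.pos h3
    nlinarith [hpp.two_le]
  have hX0 : (X : ZMod p) ≠ 0 := by
    intro h
    rw [ZMod.natCast_eq_zero_iff] at h
    have h1 := Nat.le_of_dvd (by omega) h
    have := hpp.two_le
    nlinarith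
  have hS0 : ((X + Y : ℕ) : ZMod p) ≠ 0 := by
    intro h
    rw [ZMod.natCast_eq_zero_iff] at h
    have h1 := Nat.le_of_dvd (by omega) h
    have hx1 : 1 ≤ X := by omega
    have hy : Y = 0 ∨ 1 < Y := by omega
    rcases hy with rfl | hy
    · have : p = X ^ 2 := by rw [← hXY]; ring
      exact Irreducible.not_isSquare hpp ⟨X, by rw [this]; ring⟩
    · nlinarith
  have oddX : Odd X := Nat.odd_iff.2 hX
  have oddS : Odd (X + Y) := Nat.odd_iff.2 (by omega)
  -- Legendre symbol of X
  have hLX : (X : ZMod p) ^ (p / 2) = 1 := by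
    have h1 : jacobiSym X p = 1 := by
      rw [← jacobiSym.quadratic_reciprocity_one_mod_four (by omega) oddX, jacobiSym.mod_left]
      have : ((p : ℤ) % X) = ((Y:ℤ) ^ 2) % X := by
        rw [← hXY]; push_cast
        rw [pow_two (X:ℤ), Int.add_comm, Int.add_mul_emod_self_left]
      rw [this, ← jacobiSym.mod_left]
      apply jacobiSym.sq_one'
      rw [Int.gcd_natCast_natCast]; exact hcop.symm
    rw [← jacobiSym.legendreSym.to_jacobiSym] at h1
    have := legendreSym.eq_pow p X
    rw [h1] at this
    push_cast at this
    exact this.symm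
  have hLS : ((X + Y : ℕ) : ZMod p) ^ (p / 2) = ((ZMod.χ₈ ((X + Y : ℕ) : ZMod 8) : ℤ) : ZMod p) := by
    have hg : Int.gcd ((X:ℤ) - Y) ((X + Y : ℕ) : ℤ) = 1 := by
      rw [← Int.isCoprime_iff_gcd_eq_one]
      have hc : IsCoprime (X:ℤ) (Y:ℤ) := Nat.isCoprime_iff_coprime.2 hcop
      have hc2 : IsCoprime (2:ℤ) ((X + Y : ℕ) : ℤ) := by
        have := Nat.isCoprime_iff_coprime.2 (Nat.coprime_two_left.2 oddS)
        exact_mod_cast this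
      have hc3 : IsCoprime (X:ℤ) ((X + Y : ℕ) : ℤ) := by
        push_cast
        rw [add_comm]
        simpa using hc.add_mul_left_right 1
      have hc4 := hc2.mul_left hc3
      have : (X:ℤ) - Y = 2 * X + ((X + Y : ℕ) : ℤ) * (-1) := by push_cast; ring
      rw [this]
      exact hc4.add_mul_left_left _
    have h2 : jacobiSym 2 (X + Y) * jacobiSym p (X + Y) = 1 := by
      rw [← jacobiSym.mul_left, jacobiSym.mod_left]
      have : (2 * (p : ℤ)) % ((X + Y : ℕ) : ℤ) = (((X:ℤ) - Y) ^ 2) % ((X + Y : ℕ) : ℤ) := by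
        rw [← hXY]
        have : 2 * ((X ^ 2 + Y ^ 2 : ℕ) : ℤ) = ((X:ℤ) - Y) ^ 2 + ((X + Y : ℕ) : ℤ) * ((X + Y : ℕ) : ℤ) := by
          push_cast; ring
        rw [this, Int.add_mul_emod_self_left]
      rw [this, ← jacobiSym.mod_left]
      exact jacobiSym.sq_one' hg
    have h3 : jacobiSym ((X + Y : ℕ) : ℤ) p = ZMod.χ₈ ((X + Y : ℕ) : ZMod 8) := by
      rw [← jacobiSym.quadratic_reciprocity_one_mod_four (by omega) oddS, ← jacobiSym.at_two oddS]
      rcases jacobiSym.trichotomy 2 (X + Y) with h | h | h <;> rw [h] at h2 ⊢ <;> omega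
    rw [← jacobiSym.legendreSym.to_jacobiSym] at h3
    have := legendreSym.eq_pow p ((X + Y : ℕ) : ℤ)
    rw [h3] at this
    rw [this]; norm_cast
  have hsum : (X : ZMod p) ^ 2 + (Y : ZMod p) ^ 2 = 0 := by
    have : ((X ^ 2 + Y ^ 2 : ℕ) : ZMod p) = 0 := by rw [hXY]; simp
    exact_mod_cast this
  have hf : ((Y : ZMod p) / X) ^ 2 = -1 := by
    field_simp
    linear_combination hsum
  have hsq : ((X + Y : ℕ) : ZMod p) ^ 2 = 2 * ((Y : ZMod p) / X) * (X : ZMod p) ^ 2 := by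
    push_cast
    field_simp
    linear_combination hsum
  have hmain : ((ZMod.χ₈ ((X + Y : ℕ) : ZMod 8) : ℤ) : ZMod p) = 2 ^ (p / 4) * (-1) ^ (p / 8) := by
    rw [← hLS]
    have e1 : p / 2 = 2 * (p / 4) := by omega
    have e2 : p / 4 = 2 * (p / 8) := by omega
    rw [e1, pow_mul, hsq, mul_pow, mul_pow, ← pow_mul, ← e1, hLX, mul_one]
    congr 1
    rw [e2, pow_mul, hf]
  have hmain2 : (2 : ZMod p) ^ (p / 4) = ((ZMod.χ₈ ((X + Y : ℕ) : ZMod 8) : ℤ) : ZMod p) * (-1) ^ (p / 8) := by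
    rw [hmain, mul_assoc, ← mul_pow]; simp
  have hval : ((-1 : ℤ) ^ (p / 8)) * ZMod.χ₈ ((X + Y : ℕ) : ZMod 8) = if Y % 8 = 0 then 1 else -1 := by
    obtain ⟨k, hk⟩ : ∃ k, Y = 4 * k := ⟨Y / 4, by omega⟩
    have hp16 : p % 16 = (X % 8) ^ 2 % 16 := by
      have e : X = 8 * (X / 8) + X % 8 := by omega
      rw [← hXY, hk]
      generalize X % 8 = r at *
      generalize X / 8 = q at *
      rw [e]
      have : (8 * q + r) ^ 2 + (4 * k) ^ 2 = r ^ 2 + 16 * (4 * q ^ 2 + q * r + k ^ 2) := by ring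
      rw [this, Nat.add_mul_mod_self_left]
    have hS : ((X + Y : ℕ) : ZMod 8) = (((X % 8 + Y % 8 : ℕ)) : ZMod 8) := by
      rw [ZMod.natCast_eq_natCast_iff]; show _ % _ = _ % _; omega
    rw [hS]
    have hpar : (-1 : ℤ) ^ (p / 8) = (-1) ^ ((p % 16) / 8) := by
      have : p / 8 = 2 * (p / 16) + (p % 16) / 8 := by omega
      rw [this, pow_add, pow_mul]; norm_num
    rw [hpar, hp16]
    have hx8 : X % 8 = 1 ∨ X % 8 = 3 ∨ X % 8 = 5 ∨ X % 8 = 7 := by omega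
    have hy8 : Y % 8 = 0 ∨ Y % 8 = 4 := by omega
    rcases hx8 with h | h | h | h <;> rcases hy8 with h' | h' <;> rw [h, h'] <;> decide
  have hfin : (2 : ZMod p) ^ (p / 4) = (((if Y % 8 = 0 then 1 else -1 : ℤ)) : ZMod p) := by
    rw [hmain2, ← hval]; push_cast; ring
  rw [hfin]
  split_ifs with h
  · simp [h]
  · simp only [h, iff_false]
    push_cast
    have : Fact (2 < p) := ⟨by have := hpp.two_le; rcases this.lt_or_eq with h | h; exact h; omega⟩
    exact ZMod.neg_one_ne_one

end QD

end

section
namespace QD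

/-- primary Gaussian integers -/
def prim (z : GaussianInt) : Prop := 2 * (z.im : ZMod 4) = 0 ∧ (z.re : ZMod 4) + z.im = 1

instance : DecidablePred prim := fun z => by unfold prim; infer_instance

/-- the norm as a natural number -/
def nn (z : GaussianInt) : ℕ := z.norm.natAbs

/-- the quartic weight -/
noncomputable def rho (z : GaussianInt) : ℂ := Complex.I ^ (z.im / 2)

lemma nn_cast (z : GaussianInt) : (nn z : ℤ) = z.re * z.re + z.im * z.im := by
  unfold nn
  rw [Int.natAbs_of_nonneg (GaussianInt.norm_nonneg z), Zsqrtd.norm_def]; ring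

lemma nn_mul (z w : GaussianInt) : nn (z * w) = nn z * nn w := by
  unfold nn; rw [Zsqrtd.norm_mul, Int.natAbs_mul]

lemma nn_one : nn 1 = 1 := by decide

lemma nn_pow (z : GaussianInt) (k : ℕ) : nn (z ^ k) = nn z ^ k := by
  induction k with
  | zero => simp [nn_one]
  | succ k ih => rw [pow_succ, nn_mul, ih, pow_succ]

lemma nn_eq_one_iff (z : GaussianInt) : nn z = 1 ↔ IsUnit z := Zsqrtd.norm_eq_one_iff

lemma nn_pos {z : GaussianInt} (h : z ≠ 0) : 0 < nn z := by
  have := (GaussianInt.norm_pos (x := z)).2 h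
  unfold nn; omega

lemma prim_one : prim 1 := by unfold prim; decide

lemma prim_iff (z : GaussianInt) : prim z ↔ ∃ m t : ℤ, z.re = 1 - 2 * m + 4 * t ∧ z.im = 2 * m := by
  unfold prim
  have h1 : (2 * (z.im : ZMod 4) = 0) ↔ (4:ℤ) ∣ 2 * z.im := by
    have := ZMod.intCast_zmod_eq_zero_iff_dvd (2 * z.im) 4
    push_cast at this
    exact this
  have h2 : ((z.re : ZMod 4) + z.im = 1) ↔ (4:ℤ) ∣ z.re + z.im - 1 := by
    have := ZMod.intCast_zmod_eq_zero_iff_dvd (z.re + z.im - 1) 4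
    push_cast at this
    rw [← this, sub_eq_zero]
  rw [h1, h2]
  constructor
  · rintro ⟨h3, h4⟩
    exact ⟨z.im / 2, (z.re + z.im - 1) / 4, by omega, by omega⟩
  · rintro ⟨m, t, h3, h4⟩
    omega

lemma I_zpow_add_four (m k : ℤ) : Complex.I ^ (m + 4 * k) = Complex.I ^ m := by
  rw [zpow_add₀ Complex.I_ne_zero, zpow_mul]
  have : Complex.I ^ (4:ℤ) = 1 := by
    have := Complex.I_pow_four
    exact_mod_cast this
  rw [this]; simp

lemma rho_mul {z w : GaussianInt} (hz : prim z) (hw : prim w) : rho (z * w) = rho z * rho w := by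
  obtain ⟨m, t, h1, h2⟩ := (prim_iff z).1 hz
  obtain ⟨m', t', h3, h4⟩ := (prim_iff w).1 hw
  unfold rho
  rw [Zsqrtd.im_mul, h1, h2, h3, h4, ← zpow_add₀ Complex.I_ne_zero]
  have e1 : ((1 - 2 * m + 4 * t) * (2 * m') + 2 * m * (1 - 2 * m' + 4 * t')) / 2
      = (m + m') + 4 * (t * m' + m * t' - m * m') := by
    apply Int.ediv_eq_of_eq_mul_right (by norm_num); ring
  have e2 : 2 * m / 2 = m := by omega
  have e3 : 2 * m' / 2 = m' := by omega
  rw [e1, e2, e3, I_zpow_add_four]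

lemma rho_one : rho 1 = 1 := by simp [rho]

lemma rho_norm (z : GaussianInt) : ‖rho z‖ = 1 := by simp [rho]

lemma prim_mul {z w : GaussianInt} (hz : prim z) (hw : prim w) : prim (z * w) := by
  unfold prim at *
  simp only [Zsqrtd.re_mul, Zsqrtd.im_mul]
  push_cast
  generalize (z.re : ZMod 4) = a at *
  generalize (z.im : ZMod 4) = b at *
  generalize (w.re : ZMod 4) = c at *
  generalize (w.im : ZMod 4) = d at *
  revert a b c d
  decide

lemma prim_cancel {z w : GaussianInt} (hz : prim z) (hw : prim (z * w)) : prim w := by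
  unfold prim at *
  simp only [Zsqrtd.re_mul, Zsqrtd.im_mul] at hw
  push_cast at hw
  generalize (z.re : ZMod 4) = a at *
  generalize (z.im : ZMod 4) = b at *
  generalize (w.re : ZMod 4) = c at *
  generalize (w.im : ZMod 4) = d at *
  revert a b c d
  decide

lemma prim_pow {z : GaussianInt} (hz : prim z) (k : ℕ) : prim (z ^ k) := by
  induction k with
  | zero => simpa using prim_one
  | succ k ih => rw [pow_succ]; exact prim_mul ih hz

lemma rho_pow {z : GaussianInt} (hz : prim z) (k : ℕ) : rho (z ^ k) = rho z ^ k := by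
  induction k with
  | zero => simpa using rho_one
  | succ k ih => rw [pow_succ, rho_mul (prim_pow hz k) hz, ih, pow_succ]

lemma prim_odd {z : GaussianInt} (hz : prim z) : nn z % 4 = 1 := by
  have h : ((nn z : ℤ) : ZMod 4) = 1 := by
    rw [nn_cast]
    unfold prim at hz
    push_cast
    generalize (z.re : ZMod 4) = a at *
    generalize (z.im : ZMod 4) = b at *
    revert a b
    decide
  have : ((nn z : ℕ) : ZMod 4) = (1 : ℕ) := by exact_mod_cast h
  rw [ZMod.natCast_eq_natCast_iff] at this
  exact this

lemma prim_ne_zero {z : GaussianInt} (hz : prim z) : z ≠ 0 := by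
  rintro rfl
  revert hz; unfold prim; decide

/-- every Gaussian integer of odd norm has a primary unit multiple. -/
lemma exists_prim (z : GaussianInt) (hz : nn z % 2 = 1) : ∃ u : GaussianInt, IsUnit u ∧ prim (u * z) := by
  have h : (2:ZMod 4) * ((nn z : ℤ) : ZMod 4) = 2 := by
    have : ((2 * nn z : ℕ) : ZMod 4) = (2 : ℕ) := by
      rw [ZMod.natCast_eq_natCast_iff]
      show _ % _ = _ % _
      omega
    exact_mod_cast this
  rw [nn_cast] at h
  push_cast at h
  have key : prim (1 * z) ∨ prim ((-1) * z) ∨ prim ((⟨0,1⟩ : GaussianInt) * z) ∨ prim ((⟨0,-1⟩ : GaussianInt) * z) := by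
    unfold prim
    simp only [Zsqrtd.re_mul, Zsqrtd.im_mul, one_mul, neg_mul, Zsqrtd.re_neg, Zsqrtd.im_neg]
    push_cast
    generalize (z.re : ZMod 4) = a at *
    generalize (z.im : ZMod 4) = b at *
    revert a b
    decide
  rcases key with h | h | h | h
  · exact ⟨1, isUnit_one, h⟩
  · exact ⟨-1, isUnit_one.neg, h⟩
  · exact ⟨_, (nn_eq_one_iff _).1 (by decide), h⟩
  · exact ⟨_, (nn_eq_one_iff _).1 (by decide), h⟩

lemma prim_unit {z : GaussianInt} (hz : prim z) (hu : IsUnit z) : z = 1 := by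
  have h1 := nn_cast z
  rw [(nn_eq_one_iff z).2 hu] at h1
  push_cast at h1
  have hre : z.re ≤ 1 ∧ -1 ≤ z.re := by constructor <;> nlinarith [sq_nonneg z.im]
  have him : z.im ≤ 1 ∧ -1 ≤ z.im := by constructor <;> nlinarith [sq_nonneg z.re]
  obtain ⟨a, b⟩ := z
  simp only at hre him h1
  obtain ⟨h2, h3⟩ := hre
  obtain ⟨h4, h5⟩ := him
  unfold prim at hz
  interval_cases a <;> interval_cases b <;> revert hz h1 <;> decide

lemma prim_assoc {z w : GaussianInt} (hz : prim z) (hw : prim w) (h : Associated z w) : z = w := by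
  obtain ⟨u, hu⟩ := h
  have : prim (u : GaussianInt) := prim_cancel hz (hu ▸ hw)
  rw [← hu, prim_unit this u.isUnit, mul_one]

end QD

end

section
namespace QD

/-- primary Gaussian integers of norm at most `B` -/
noncomputable def gsB (B : ℕ) : Finset GaussianInt :=
  (((Finset.Icc (-B:ℤ) B) ×ˢ (Finset.Icc (-B:ℤ) B)).image
    (fun p => (⟨p.1, p.2⟩ : GaussianInt))).filter (fun z => prim z ∧ nn z ≤ B)

lemma abs_re_le (z : GaussianInt) : |z.re| ≤ nn z := by
  rw [nn_cast, abs_le]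
  rcases le_or_gt z.re 0 with h | h
  · constructor <;> nlinarith [mul_self_nonneg z.im]
  · constructor <;> nlinarith [mul_self_nonneg z.im]

lemma abs_im_le (z : GaussianInt) : |z.im| ≤ nn z := by
  rw [nn_cast, abs_le]
  rcases le_or_gt z.im 0 with h | h
  · constructor <;> nlinarith [mul_self_nonneg z.re]
  · constructor <;> nlinarith [mul_self_nonneg z.re]

lemma mem_gsB {B : ℕ} {z : GaussianInt} : z ∈ gsB B ↔ prim z ∧ nn z ≤ B := by
  unfold gsB
  simp only [Finset.mem_filter, Finset.mem_image, Finset.mem_product, Finset.mem_Icc, Prod.exists,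
    and_iff_right_iff_imp]
  rintro ⟨-, h⟩
  have h' : (nn z : ℤ) ≤ B := by exact_mod_cast h
  have h1 := abs_le.1 ((abs_re_le z).trans h')
  have h2 := abs_le.1 ((abs_im_le z).trans h')
  exact ⟨z.re, z.im, ⟨h1, h2⟩, rfl⟩

/-- primary Gaussian integers of norm `n` -/
noncomputable def gs (n : ℕ) : Finset GaussianInt := (gsB n).filter (fun z => nn z = n)

lemma mem_gs {n : ℕ} {z : GaussianInt} : z ∈ gs n ↔ prim z ∧ nn z = n := by
  unfold gs
  rw [Finset.mem_filter, mem_gsB]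
  constructor
  · rintro ⟨⟨h, -⟩, h'⟩; exact ⟨h, h'⟩
  · rintro ⟨h, h'⟩; exact ⟨⟨h, h'.le⟩, h'⟩

open scoped Classical in
/-- primary primes of norm at most `B` -/
noncomputable def PP (B : ℕ) : Finset GaussianInt := (gsB B).filter Prime

lemma mem_PP {B : ℕ} {z : GaussianInt} : z ∈ PP B ↔ prim z ∧ nn z ≤ B ∧ Prime z := by
  unfold PP
  simp only [Finset.mem_filter, mem_gsB, and_assoc]

/-- coefficients of the Hecke L-function -/
noncomputable def aa (n : ℕ) : ℂ := ∑ z ∈ gs n, rho z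

/-- coefficients of the logarithmic derivative, with truncation -/
noncomputable def bbB (B n : ℕ) : ℂ := ∑ π ∈ PP B, ∑ j ∈ Finset.Icc 1 B,
  if nn π ^ j = n then (Real.log (nn π) : ℂ) * rho π ^ j else 0

/-- coefficients of the logarithmic derivative -/
noncomputable def bb (n : ℕ) : ℂ := bbB n n

lemma two_le_nn {z : GaussianInt} (h : Prime z) : 2 ≤ nn z := by
  have h1 := nn_pos h.ne_zero
  have h2 : nn z ≠ 1 := fun h' => h.not_isUnit ((nn_eq_one_iff z).1 h')
  omega

lemma bb_eq {B n : ℕ} (hn : 1 ≤ n) (h : n ≤ B) : bbB B n = bb n := by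
  unfold bb bbB
  symm
  have key : ∀ π : GaussianInt, Prime π → ∀ j : ℕ, 1 ≤ j → nn π ^ j = n → nn π ≤ n ∧ j ≤ n := by
    intro π hπ j hj e
    have h2 := two_le_nn hπ
    constructor
    · rw [← e]; exact Nat.le_self_pow (by omega) _
    · rw [← e]; exact (Nat.lt_pow_self h2).le
  apply Finset.sum_subset_zero_on_sdiff
  · intro z hz; rw [mem_PP] at *; exact ⟨hz.1, hz.2.1.trans h, hz.2.2⟩
  · intro z hz
    rw [Finset.mem_sdiff, mem_PP, mem_PP] at hz
    apply Finset.sum_eq_zero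
    intro j hj
    rw [if_neg]
    intro e
    exact hz.2 ⟨hz.1.1, (key z hz.1.2.2 j (Finset.mem_Icc.1 hj).1 e).1, hz.1.2.2⟩
  · intro z hz
    rw [mem_PP] at hz
    apply Finset.sum_subset_zero_on_sdiff
    · exact Finset.Icc_subset_Icc le_rfl h
    · intro j hj
      rw [Finset.mem_sdiff, Finset.mem_Icc, Finset.mem_Icc] at hj
      rw [if_neg]
      intro e
      exact hj.2 ⟨hj.1.1, (key z hz.2.2 j hj.1.1 e).2⟩
    · intros; rfl

lemma exists_prim_prime {α : GaussianInt} (hα : prim α) (hu : ¬ IsUnit α) :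
    ∃ π β : GaussianInt, prim π ∧ Prime π ∧ prim β ∧ α = π * β := by
  obtain ⟨q, hq, β, hβ⟩ := WfDvdMonoid.exists_irreducible_factor hu (prim_ne_zero hα)
  have hqp : Prime q := hq.prime
  have hodd := prim_odd hα
  have hq2 : nn q % 2 = 1 := by
    rw [hβ, nn_mul] at hodd
    have : (nn q * nn β) % 2 = 1 := by omega
    exact Nat.odd_iff.1 (Nat.odd_mul.1 (Nat.odd_iff.2 this)).1
  obtain ⟨u, hu, hpu⟩ := exists_prim q hq2
  obtain ⟨v, rfl⟩ := hu
  have e : α = (v * q) * ((v⁻¹ : (GaussianInt)ˣ) * β) := by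
    rw [hβ]
    have : (v : GaussianInt) * ((v⁻¹ : (GaussianInt)ˣ) : GaussianInt) = 1 := v.mul_inv
    linear_combination (-(q * β)) * this
  refine ⟨v * q, (v⁻¹ : (GaussianInt)ˣ) * β, hpu, ?_, ?_, e⟩
  · exact (Associated.prime_iff (associated_unit_mul_left q _ v.isUnit)).2 hqp
  · exact prim_cancel hpu (e ▸ hα)

lemma fin_mult {π α : GaussianInt} (hπ : Prime π) (hα : α ≠ 0) : FiniteMultiplicity π α :=
  FiniteMultiplicity.of_prime_left hπ hα

lemma V_lemma (B : ℕ) : ∀ N : ℕ, ∀ α : GaussianInt, prim α → nn α = N → N ≤ B →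
    ∑ π ∈ PP B, (multiplicity π α : ℝ) * Real.log (nn π) = Real.log (nn α) := by
  intro N
  induction N using Nat.strong_induction_on with
  | _ N ih =>
  intro α hα hN hB
  by_cases hu : IsUnit α
  · have := prim_unit hα hu
    subst this
    rw [nn_one]
    simp only [Nat.cast_one, Real.log_one]
    apply Finset.sum_eq_zero
    intro π hπ
    rw [mem_PP] at hπ
    rw [multiplicity_eq_zero.2]
    · simp
    · intro h
      exact hπ.2.2.not_isUnit (isUnit_of_dvd_one h)
  · obtain ⟨q, β, hq, hqp, hβ, e⟩ := exists_prim_prime hα hu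
    have hnn : nn α = nn q * nn β := by rw [e, nn_mul]
    have h2 := two_le_nn hqp
    have hβ0 := nn_pos (prim_ne_zero hβ)
    have hlt : nn β < N := by rw [← hN, hnn]; nlinarith
    have hqB : q ∈ PP B := mem_PP.2 ⟨hq, by nlinarith, hqp⟩
    have h3 := ih (nn β) hlt β hβ rfl (by omega)
    rw [hnn]
    push_cast
    rw [Real.log_mul (by positivity) (by positivity), ← h3]
    have : ∀ π ∈ PP B, (multiplicity π α : ℝ) * Real.log (nn π) =
        (if π = q then Real.log (nn q) else 0) + (multiplicity π β : ℝ) * Real.log (nn π) := by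
      intro π hπ
      rw [mem_PP] at hπ
      rw [e, multiplicity_mul hπ.2.2 (by rw [← e]; exact fin_mult hπ.2.2 (prim_ne_zero hα))]
      split_ifs with h
      · subst h
        rw [multiplicity_self]
        push_cast; ring
      · rw [multiplicity_eq_zero.2]
        · push_cast; ring
        · intro hd
          exact h (prim_assoc hπ.1 hq (hπ.2.2.associated_of_dvd hqp hd))
    rw [Finset.sum_congr rfl this, Finset.sum_add_distrib, Finset.sum_ite_eq' , if_pos hqB]

open scoped Classical in
lemma sum_dvd_eq_mult {π α : GaussianInt} (hπ : Prime π) (hα : α ≠ 0) {n : ℕ} (hn : nn α ≤ n) :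
    (∑ j ∈ Finset.Icc 1 n, if π ^ j ∣ α then (1:ℂ) else 0) = (multiplicity π α : ℂ) := by
  have hf := fin_mult hπ hα
  have hm : multiplicity π α ≤ n := by
    obtain ⟨c, hc⟩ := pow_multiplicity_dvd π α
    have h1 : nn α = nn π ^ multiplicity π α * nn c := by
      conv_lhs => rw [hc]
      rw [nn_mul, nn_pow]
    have h2 : 0 < nn c := nn_pos (by rintro rfl; rw [mul_zero] at hc; exact hα hc)
    have h3 := Nat.lt_pow_self (n := multiplicity π α) (two_le_nn hπ)
    nlinarith
  have : ∀ j, π ^ j ∣ α ↔ j ≤ multiplicity π α := fun j => hf.pow_dvd_iff_le_multiplicity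
  simp only [this]
  rw [Finset.sum_ite, Finset.sum_const_zero, add_zero, Finset.sum_const, nsmul_eq_mul, mul_one]
  have : Finset.filter (fun j => j ≤ multiplicity π α) (Finset.Icc 1 n) = Finset.Icc 1 (multiplicity π α) := by
    ext j; simp only [Finset.mem_filter, Finset.mem_Icc]; omega
  rw [this]; simp

open scoped Classical in
lemma conv_inner {d : GaussianInt} (hd : prim d) {n : ℕ} (hn : 1 ≤ n) :
    (∑ x ∈ n.divisorsAntidiagonal, (if nn d = x.1 then rho d else 0) * aa x.2) =
      ∑ α ∈ gs n, if d ∣ α then rho α else 0 := by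
  have hd0 := nn_pos (prim_ne_zero hd)
  by_cases h : nn d ∣ n
  · obtain ⟨l, rfl⟩ := h
    have hl : 0 < l := by
      rcases Nat.eq_zero_or_pos l with h | h
      · subst h; omega
      · exact h
    rw [Finset.sum_eq_single (nn d, l)]
    · rw [if_pos rfl]
      unfold aa
      rw [← Finset.sum_filter, Finset.mul_sum]
      apply Finset.sum_bij (fun w _ => d * w)
      · intro w hw
        rw [mem_gs] at hw
        rw [Finset.mem_filter, mem_gs, nn_mul, hw.2]
        exact ⟨⟨prim_mul hd hw.1, rfl⟩, Dvd.intro _ rfl⟩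
      · intro w _ w' _ h
        exact mul_left_cancel₀ (prim_ne_zero hd) h
      · intro α hα
        rw [Finset.mem_filter, mem_gs] at hα
        obtain ⟨⟨h1, h2⟩, w, rfl⟩ := hα
        refine ⟨w, ?_, rfl⟩
        rw [mem_gs]
        refine ⟨prim_cancel hd h1, ?_⟩
        rw [nn_mul] at h2
        exact Nat.eq_of_mul_eq_mul_left hd0 h2
      · intro w hw
        rw [mem_gs] at hw
        rw [rho_mul hd hw.1]
    · rintro ⟨k, l'⟩ hx hne
      rw [Nat.mem_divisorsAntidiagonal] at hx
      rw [if_neg, zero_mul]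
      intro e
      simp only at e hx
      subst e
      exact hne (by rw [Nat.eq_of_mul_eq_mul_left hd0 hx.1])
    · intro hx
      exfalso; apply hx
      rw [Nat.mem_divisorsAntidiagonal]
      exact ⟨rfl, by omega⟩
  · rw [Finset.sum_eq_zero, Finset.sum_eq_zero]
    · intro α hα
      rw [mem_gs] at hα
      rw [if_neg]
      rintro ⟨w, rfl⟩
      exact h ⟨nn w, by rw [← hα.2, nn_mul]⟩
    · rintro ⟨k, l⟩ hx
      rw [Nat.mem_divisorsAntidiagonal] at hx
      rw [if_neg, zero_mul]
      intro e
      exact h ⟨l, by rw [← hx.1, e]⟩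

open scoped Classical in
theorem conv_ab {n : ℕ} (hn : 1 ≤ n) :
    ∑ x ∈ n.divisorsAntidiagonal, bb x.1 * aa x.2 = aa n * (Real.log n : ℂ) := by
  have h1 : ∀ x ∈ n.divisorsAntidiagonal, bb x.1 * aa x.2 = ∑ π ∈ PP n, ∑ j ∈ Finset.Icc 1 n,
      (Real.log (nn π) : ℂ) * ((if nn (π ^ j) = x.1 then rho (π ^ j) else 0) * aa x.2) := by
    rintro ⟨k, l⟩ hx
    rw [Nat.mem_divisorsAntidiagonal] at hx
    have hk : 1 ≤ k := by
      rcases Nat.eq_zero_or_pos k with h | h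
      · subst h; simp at hx; omega
      · exact h
    have hkn : k ≤ n := Nat.le_of_dvd (by omega) ⟨l, hx.1.symm⟩
    simp only
    rw [← bb_eq hk hkn]
    unfold bbB
    rw [Finset.sum_mul]
    refine Finset.sum_congr rfl fun π hπ => ?_
    rw [Finset.sum_mul]
    refine Finset.sum_congr rfl fun j _ => ?_
    rw [nn_pow, rho_pow (mem_PP.1 hπ).1]
    split_ifs <;> ring
  rw [Finset.sum_congr rfl h1, Finset.sum_comm]
  have h2 : ∀ π ∈ PP n, (∑ x ∈ n.divisorsAntidiagonal, ∑ j ∈ Finset.Icc 1 n,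
      (Real.log (nn π) : ℂ) * ((if nn (π ^ j) = x.1 then rho (π ^ j) else 0) * aa x.2)) =
      ∑ α ∈ gs n, rho α * ((multiplicity π α : ℝ) * Real.log (nn π) : ℝ) := by
    intro π hπ
    rw [mem_PP] at hπ
    rw [Finset.sum_comm]
    simp_rw [← Finset.mul_sum]
    rw [Finset.sum_congr rfl fun j _ => conv_inner (prim_pow hπ.1 j) hn, Finset.sum_comm,
      Finset.mul_sum]
    refine Finset.sum_congr rfl fun α hα => ?_
    rw [mem_gs] at hα
    have := sum_dvd_eq_mult hπ.2.2 (prim_ne_zero hα.1) hα.2.le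
    push_cast
    rw [← this, Finset.sum_mul, Finset.mul_sum, Finset.mul_sum]
    refine Finset.sum_congr rfl fun j _ => ?_
    split_ifs <;> simp [mul_comm]
  rw [Finset.sum_congr rfl h2, Finset.sum_comm]
  unfold aa
  rw [Finset.sum_mul]
  refine Finset.sum_congr rfl fun α hα => ?_
  rw [mem_gs] at hα
  rw [← Finset.mul_sum, ← Complex.ofReal_sum, V_lemma n n α hα.1 hα.2 le_rfl, hα.2]

lemma exists_rat_prime {π : GaussianInt} (hπ : Prime π) : ∃ p : ℕ, p.Prime ∧ π ∣ (p : GaussianInt) := by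
  have h1 : π ∣ ((nn π : ℕ) : GaussianInt) := by
    refine ⟨star π, ?_⟩
    rw [← Zsqrtd.norm_eq_mul_conj]
    have : ((nn π : ℕ) : ℤ) = π.norm := by
      unfold nn; exact Int.natAbs_of_nonneg (GaussianInt.norm_nonneg π)
    rw [← this]; norm_cast
  have h2 := Nat.prod_primeFactorsList (nn_pos hπ.ne_zero).ne'
  rw [← h2, Nat.cast_list_prod, Prime.dvd_prod_iff hπ] at h1
  obtain ⟨a, ha, hd⟩ := h1
  rw [List.mem_map] at ha
  obtain ⟨p, hp, rfl⟩ := ha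
  exact ⟨p, Nat.prime_of_mem_primeFactorsList hp, hd⟩

lemma nn_natCast (p : ℕ) : nn (p : GaussianInt) = p ^ 2 := by
  have h := nn_cast (p : GaussianInt)
  simp at h
  zify; rw [h]; ring

open ArithmeticFunction in
theorem bb_bound (n : ℕ) : ‖bb n‖ ≤ 2 * vonMangoldt n := by
  have hΛ : 0 ≤ vonMangoldt n := vonMangoldt_nonneg
  by_cases hex : ∃ π : GaussianInt, prim π ∧ Prime π ∧ ∃ j : ℕ, 1 ≤ j ∧ nn π ^ j = n
  swap
  · have : bb n = 0 := by
      unfold bb bbB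
      refine Finset.sum_eq_zero fun π hπ => Finset.sum_eq_zero fun j hj => if_neg fun e => ?_
      rw [mem_PP] at hπ
      exact hex ⟨π, hπ.1, hπ.2.2, j, (Finset.mem_Icc.1 hj).1, e⟩
    rw [this, norm_zero]; positivity
  have key : ∀ π : GaussianInt, Prime π → ∀ j : ℕ, 1 ≤ j → nn π ^ j = n →
      ∃ p : ℕ, p.Prime ∧ π ∣ (p : GaussianInt) ∧ nn π ∣ p ^ 2 ∧ n.minFac = p ∧ vonMangoldt n = Real.log p := by
    intro π hπ j hj e
    obtain ⟨p, hp, hd⟩ := exists_rat_prime hπ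
    have h1 : nn π ∣ p ^ 2 := by
      obtain ⟨c, hc⟩ := hd
      rw [← nn_natCast, hc, nn_mul]; exact Dvd.intro _ rfl
    obtain ⟨k, hk, hk'⟩ := (Nat.dvd_prime_pow hp).1 h1
    have hk0 : k ≠ 0 := by
      rintro rfl
      have := two_le_nn hπ
      rw [hk'] at this; simp at this
    have hn : n = p ^ (k * j) := by rw [← e, hk', pow_mul]
    have hkj : k * j ≠ 0 := mul_ne_zero hk0 (by omega)
    refine ⟨p, hp, hd, h1, ?_, ?_⟩
    · rw [hn, Nat.Prime.pow_minFac hp hkj]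
    · rw [hn, vonMangoldt_apply_pow hkj, vonMangoldt_apply_prime hp]
  obtain ⟨π₀, hπ₀, hπ₀', j₀, hj₀, e₀⟩ := hex
  obtain ⟨p, hp, hd₀, hdd₀, hmin, hL⟩ := key π₀ hπ₀' j₀ hj₀ e₀
  have hpodd : p % 2 = 1 := by
    rcases hp.eq_two_or_odd with h | h
    · exfalso
      subst h
      have h1 := prim_odd hπ₀
      have h2 := two_le_nn hπ₀'
      obtain ⟨k, hk, hk'⟩ := (Nat.dvd_prime_pow hp).1 hdd₀
      interval_cases k <;> omega
    · exact h
  obtain ⟨u, hu, hpu⟩ := exists_prim (p : GaussianInt) (by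
    rw [nn_natCast]; exact Nat.odd_iff.1 ((Nat.odd_iff.2 hpodd).pow))
  have hnu : nn (u * p) = p ^ 2 := by rw [nn_mul, (nn_eq_one_iff u).2 hu, one_mul, nn_natCast]
  have hn0 : 0 < n := by rw [← e₀]; exact pow_pos (by have := two_le_nn hπ₀'; omega) _
  have hpn : p ≤ n := hmin ▸ Nat.minFac_le hn0
  have hV := V_lemma (n ^ 2) (p ^ 2) (u * p) hpu hnu (Nat.pow_le_pow_left hpn 2)
  have hlog : ∀ π : GaussianInt, Prime π → 0 ≤ Real.log (nn π) := fun π hπ =>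
    Real.log_natCast_nonneg _
  calc ‖bb n‖ ≤ ∑ π ∈ PP n, (multiplicity π (u * p) : ℝ) * Real.log (nn π) := by
        unfold bb bbB
        refine norm_sum_le_of_le _ fun π hπ => ?_
        rw [mem_PP] at hπ
        by_cases hj : ∃ j, 1 ≤ j ∧ nn π ^ j = n
        · obtain ⟨j, hj, e⟩ := hj
          have hm : 1 ≤ multiplicity π (u * (p : GaussianInt)) := by
            obtain ⟨p', hp', hd, -, hmin', -⟩ := key π hπ.2.2 j hj e
            have : p' = p := hmin'.symm.trans hmin
            subst this
            rw [← (fin_mult hπ.2.2 (prim_ne_zero hpu)).pow_dvd_iff_le_multiplicity, pow_one]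
            exact hd.mul_left _
          have hle : ‖∑ j ∈ Finset.Icc 1 n, if nn π ^ j = n then (Real.log (nn π) : ℂ) * rho π ^ j else 0‖
              ≤ Real.log (nn π) := by
            rw [Finset.sum_eq_single j]
            · rw [if_pos e, norm_mul, norm_pow, rho_norm, one_pow, mul_one, Complex.norm_real,
                Real.norm_of_nonneg (hlog π hπ.2.2)]
            · intro i _ hi
              rw [if_neg]
              intro e'
              exact hi (Nat.pow_right_injective (two_le_nn hπ.2.2) (e'.trans e.symm))
            · intro h
              rw [if_neg]
              intro _
              apply h
              rw [Finset.mem_Icc]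
              refine ⟨hj, ?_⟩
              rw [← e]; exact (Nat.lt_pow_self (two_le_nn hπ.2.2)).le
          refine hle.trans ?_
          have : (1:ℝ) ≤ multiplicity π (u * (p : GaussianInt)) := by exact_mod_cast hm
          nlinarith [hlog π hπ.2.2]
        · rw [Finset.sum_eq_zero]
          · rw [norm_zero]
            exact mul_nonneg (Nat.cast_nonneg _) (hlog π hπ.2.2)
          · intro j hj'
            exact if_neg fun e => hj ⟨j, (Finset.mem_Icc.1 hj').1, e⟩
    _ ≤ ∑ π ∈ PP (n ^ 2), (multiplicity π (u * p) : ℝ) * Real.log (nn π) := by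
        apply Finset.sum_le_sum_of_subset_of_nonneg
        · intro z hz; rw [mem_PP] at *
          exact ⟨hz.1, hz.2.1.trans (Nat.le_self_pow (by norm_num) _), hz.2.2⟩
        · intro z hz _
          rw [mem_PP] at hz
          exact mul_nonneg (Nat.cast_nonneg _) (hlog z hz.2.2)
    _ = 2 * vonMangoldt n := by
        rw [hV, hnu, hL]; push_cast; rw [Real.log_pow]; norm_num

lemma bb_one : bb 1 = 0 := by
  have := bb_bound 1
  simp at this
  exact this

lemma gs_one : gs 1 = {1} := by
  ext z
  rw [mem_gs, Finset.mem_singleton]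
  constructor
  · rintro ⟨h1, h2⟩; exact prim_unit h1 ((nn_eq_one_iff z).1 h2)
  · rintro rfl; exact ⟨prim_one, nn_one⟩

lemma aa_one : aa 1 = 1 := by
  unfold aa; rw [gs_one, Finset.sum_singleton, rho_one]

lemma bb_prime {p : ℕ} (hp : p.Prime) : bb p = aa p * (Real.log p : ℂ) := by
  have := conv_ab hp.one_le
  rw [Nat.sum_divisorsAntidiagonal (f := fun k l => bb k * aa l), hp.sum_divisors] at this
  simpa [bb_one, aa_one, Nat.div_self hp.pos] using this

lemma aa_prime_le {p : ℕ} (hp : p.Prime) : ‖aa p‖ ≤ 2 := by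
  have h := bb_bound p
  have hl : 0 < Real.log p := Real.log_pos (by exact_mod_cast hp.one_lt)
  rw [bb_prime hp, norm_mul, ArithmeticFunction.vonMangoldt_apply_prime hp, Complex.norm_real,
    Real.norm_of_nonneg hl.le] at h
  exact le_of_mul_le_mul_right h hl

end QD

end

section
namespace QD

lemma aa_eq_zero_of {n : ℕ} (h : n % 4 ≠ 1) : aa n = 0 := by
  unfold aa
  have : gs n = ∅ := by
    ext z
    simp only [mem_gs, Finset.notMem_empty, iff_false]
    rintro ⟨h1, rfl⟩
    exact h (prim_odd h1)
  rw [this, Finset.sum_empty]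

lemma nn_mod_eight {z : GaussianInt} {m t : ℤ} (h1 : z.re = 1 - 2 * m + 4 * t) (h2 : z.im = 2 * m) :
    (nn z : ℤ) % 8 = if m % 2 = 0 then 1 else 5 := by
  rw [nn_cast, h1, h2]
  obtain ⟨k, hk⟩ : ∃ k, m * (m - 1) = 2 * k := by
    obtain ⟨k, hk⟩ := (Int.even_mul_pred_self m)
    exact ⟨k, by rw [hk]; ring⟩
  split_ifs with h
  · obtain ⟨l, rfl⟩ : ∃ l, m = 2 * l := ⟨m / 2, by omega⟩
    have : (1 - 2 * (2 * l) + 4 * t) * (1 - 2 * (2 * l) + 4 * t) + 2 * (2 * l) * (2 * (2 * l))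
      = 1 + 8 * (t - l - 4 * t * l + 2 * l ^ 2 + 2 * t ^ 2 + 2 * l ^ 2) := by ring
    rw [this]; omega
  · obtain ⟨l, rfl⟩ : ∃ l, m = 2 * l + 1 := ⟨m / 2, by omega⟩
    have : (1 - 2 * (2 * l + 1) + 4 * t) * (1 - 2 * (2 * l + 1) + 4 * t) + 2 * (2 * l + 1) * (2 * (2 * l + 1))
      = 5 + 8 * (-t + 3 * l - 4 * t * l + 4 * l ^ 2 + 2 * t ^ 2) := by ring
    rw [this]; omega

/-- conjugation -/
def cj (z : GaussianInt) : GaussianInt := ⟨z.re, -z.im⟩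

lemma cj_cj (z : GaussianInt) : cj (cj z) = z := by simp [cj]

lemma cj_mem {n : ℕ} {z : GaussianInt} (h : z ∈ gs n) : cj z ∈ gs n := by
  rw [mem_gs] at *
  constructor
  · obtain ⟨m, t, h1, h2⟩ := (prim_iff z).1 h.1
    exact (prim_iff _).2 ⟨-m, t - m, by simp [cj, h1]; ring, by simp [cj, h2]⟩
  · have e1 := nn_cast z
    have e2 := nn_cast (cj z)
    simp only [cj] at e2 ⊢
    rw [← h.2]; zify; rw [e1, e2]; ring

lemma aa_five {n : ℕ} (h : n % 8 = 5) : aa n = 0 := by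
  unfold aa
  have key : ∀ z ∈ gs n, rho z + rho (cj z) = 0 := by
    intro z hz
    rw [mem_gs] at hz
    obtain ⟨m, t, h1, h2⟩ := (prim_iff z).1 hz.1
    have h3 := nn_mod_eight h1 h2
    rw [hz.2] at h3
    have hm : m % 2 = 1 := by
      split_ifs at h3 <;> omega
    obtain ⟨l, rfl⟩ : ∃ l, m = 2 * l + 1 := ⟨m / 2, by omega⟩
    unfold rho cj
    rw [h2]
    have e1 : 2 * (2 * l + 1) / 2 = (2 * l - 1) + 2 := by omega
    have e2 : -(2 * (2 * l + 1)) / 2 = (2 * l - 1) + 4 * (-l) := by omega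
    simp only [e1, e2, I_zpow_add_four]
    rw [zpow_add₀ Complex.I_ne_zero]
    have : Complex.I ^ (2:ℤ) = -1 := by
      have := Complex.I_sq
      exact_mod_cast this
    rw [this]; ring
  refine Finset.sum_involution (fun z _ => cj z) key ?_ (fun z hz => cj_mem hz) (fun z _ => cj_cj z)
  intro z hz hne h
  have := key z hz
  rw [h] at this
  apply hne
  linear_combination this / 2

lemma rho_prime {p : ℕ} (hp : p.Prime) (h : p % 8 = 1) {z : GaussianInt} (hz : z ∈ gs p) :
    ((∃ w : ZMod p, w ^ 4 = 2) → rho z = 1) ∧ ((¬ ∃ w : ZMod p, w ^ 4 = 2) → rho z = -1) := by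
  haveI : Fact p.Prime := ⟨hp⟩
  rw [mem_gs] at hz
  obtain ⟨m, t, h1, h2⟩ := (prim_iff z).1 hz.1
  have h3 := nn_mod_eight h1 h2
  rw [hz.2] at h3
  have hm : m % 2 = 0 := by
    split_ifs at h3 <;> omega
  have hq := quartic (p := p) h z.re.natAbs z.im.natAbs (by
    have := nn_cast z
    rw [hz.2] at this
    zify; rw [sq_abs, sq_abs, this]; ring) (by omega) (by omega)
  obtain ⟨l, rfl⟩ : ∃ l, m = 2 * l := ⟨m / 2, by omega⟩
  rw [hq, h2]
  unfold rho
  rw [h2]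
  constructor
  · intro hy
    have : 2 * (2 * l) / 2 = 0 + 4 * (l / 2) := by omega
    rw [this, I_zpow_add_four]; simp
  · intro hy
    have : 2 * (2 * l) / 2 = 2 + 4 * (l / 2) := by omega
    rw [this, I_zpow_add_four]
    have := Complex.I_sq
    exact_mod_cast this

lemma card_gs {p : ℕ} (hp : p.Prime) (h : p % 8 = 1) : (gs p).card = 2 := by
  haveI : Fact p.Prime := ⟨hp⟩
  have hε : ∃ ε : ℂ, ‖ε‖ = 1 ∧ ∀ z ∈ gs p, rho z = ε := by
    by_cases hw : ∃ w : ZMod p, w ^ 4 = 2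
    · exact ⟨1, by simp, fun z hz => (rho_prime hp h hz).1 hw⟩
    · exact ⟨-1, by simp, fun z hz => (rho_prime hp h hz).2 hw⟩
  obtain ⟨ε, h1, h2⟩ := hε
  have h3 := aa_prime_le hp
  unfold aa at h3
  rw [Finset.sum_congr rfl h2, Finset.sum_const, nsmul_eq_mul, norm_mul, h1, mul_one,
    Complex.norm_natCast] at h3
  have h4 : (gs p).card ≤ 2 := by exact_mod_cast h3
  obtain ⟨a, b, hab⟩ := Nat.Prime.sq_add_sq (p := p) (by omega)
  have hnn : nn (⟨a, b⟩ : GaussianInt) = p := by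
    zify; rw [nn_cast]; simp only; rw [← hab]; push_cast; ring
  obtain ⟨u, hu, hpu⟩ := exists_prim ⟨a, b⟩ (by omega)
  have hmem : u * ⟨a, b⟩ ∈ gs p := by
    rw [mem_gs, nn_mul, (nn_eq_one_iff u).2 hu, hnn]; exact ⟨hpu, by ring⟩
  generalize u * ⟨(a:ℤ), b⟩ = z at hmem
  have hne : z ≠ cj z := by
    intro e
    have e1 : z.im = - z.im := congrArg Zsqrtd.im e
    have e2 : z.im = 0 := by omega
    have e3 := nn_cast z
    rw [(mem_gs.1 hmem).2, e2] at e3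
    refine Irreducible.not_isSquare hp ⟨z.re.natAbs, ?_⟩
    zify; rw [abs_mul_abs_self, e3]; ring
  have h5 : 2 ≤ (gs p).card := by
    rw [← Finset.card_pair hne]
    apply Finset.card_le_card
    intro w hw
    simp only [Finset.mem_insert, Finset.mem_singleton] at hw
    rcases hw with rfl | rfl
    · exact hmem
    · exact cj_mem hmem
  omega

open scoped Classical in
theorem aa_prime {p : ℕ} (hp : p.Prime) (h : p % 8 = 1) :
    aa p = if ∃ w : ZMod p, w ^ 4 = 2 then 2 else -2 := by
  unfold aa
  split_ifs with hw
  · rw [Finset.sum_congr rfl fun z hz => (rho_prime hp h hz).1 hw, Finset.sum_const, card_gs hp h]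
    norm_num
  · rw [Finset.sum_congr rfl fun z hz => (rho_prime hp h hz).2 hw, Finset.sum_const, card_gs hp h]
    norm_num

theorem bb_prime_zero {p : ℕ} (hp : p.Prime) (h : p % 8 ≠ 1) : bb p = 0 := by
  rw [bb_prime hp]
  have : aa p = 0 := by
    by_cases h4 : p % 4 = 1
    · exact aa_five (by omega)
    · exact aa_eq_zero_of h4
  rw [this, zero_mul]

end QD

end

section
namespace QD

lemma antiper_sum (G : ℤ → ℂ) (h4 : ∀ b, G (b + 4) = - G b) (h1 : ∀ b, ‖G b‖ ≤ 1) (u : ℤ) (L : ℕ) :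
    ‖∑ k ∈ Finset.range L, G (u + k)‖ ≤ 8 := by
  induction L using Nat.strong_induction_on with
  | _ L ih =>
  rcases lt_or_ge L 8 with h | h
  · refine (norm_sum_le_of_le _ fun k _ => h1 _).trans ?_
    simp only [Finset.sum_const, Finset.card_range, nsmul_eq_mul, mul_one]
    have : (L:ℝ) ≤ (8:ℕ) := by exact_mod_cast h.le
    simpa using this
  · obtain ⟨L, rfl⟩ : ∃ L', L = L' + 8 := ⟨L - 8, by omega⟩
    have e : ∑ k ∈ Finset.range (L + 8), G (u + k) = ∑ k ∈ Finset.range L, G (u + k) := by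
      simp only [Finset.sum_range_succ]
      push_cast
      have a0 := h4 (u + L)
      have a1 := h4 (u + (L + 1))
      have a2 := h4 (u + (L + 2))
      have a3 := h4 (u + (L + 3))
      rw [show u + (L:ℤ) + 4 = u + (L + 4) by ring] at a0
      rw [show u + ((L:ℤ) + 1) + 4 = u + (L + 5) by ring] at a1
      rw [show u + ((L:ℤ) + 2) + 4 = u + (L + 6) by ring] at a2
      rw [show u + ((L:ℤ) + 3) + 4 = u + (L + 7) by ring] at a3
      rw [a0, a1, a2, a3]; ring
    rw [e]; exact ih L (by omega)

lemma sum_Icc_eq (G : ℤ → ℂ) (M : ℕ) :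
    ∑ b ∈ Finset.Icc (-M : ℤ) M, G b = ∑ k ∈ Finset.range (2 * M + 1), G (-M + k) := by
  symm
  apply Finset.sum_bij (fun (k : ℕ) _ => (-M : ℤ) + k)
  · intro k hk
    rw [Finset.mem_range] at hk
    rw [Finset.mem_Icc]; omega
  · intro k _ k' _ h; omega
  · intro b hb
    rw [Finset.mem_Icc] at hb
    exact ⟨(b + M).toNat, by rw [Finset.mem_range]; omega, by omega⟩
  · intros; rfl

lemma sum_gsB (N : ℕ) (F : GaussianInt → ℂ) :
    ∑ z ∈ gsB N, F z = ∑ a ∈ Finset.Icc (-(Nat.sqrt N) : ℤ) (Nat.sqrt N),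
      ∑ b ∈ Finset.Icc (-(Nat.sqrt N) : ℤ) (Nat.sqrt N),
        if prim ⟨a, b⟩ ∧ nn ⟨a, b⟩ ≤ N then F ⟨a, b⟩ else 0 := by
  rw [← Finset.sum_product', ← Finset.sum_filter]
  symm
  apply Finset.sum_bij (fun x _ => (⟨x.1, x.2⟩ : GaussianInt))
  · rintro ⟨a, b⟩ h
    rw [Finset.mem_filter] at h
    exact mem_gsB.2 h.2
  · rintro ⟨a, b⟩ _ ⟨c, d⟩ _ h
    simp only [Zsqrtd.mk.injEq] at h
    rw [h.1, h.2]
  · rintro ⟨a, b⟩ h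
    refine ⟨(a, b), ?_, rfl⟩
    rw [mem_gsB] at h
    rw [Finset.mem_filter, Finset.mem_product, Finset.mem_Icc, Finset.mem_Icc]
    have e := nn_cast ⟨a, b⟩
    simp only at e
    have hN : (nn ⟨a, b⟩ : ℤ) ≤ N := by exact_mod_cast h.2
    have h1 : a.natAbs ≤ Nat.sqrt N := by
      rw [Nat.le_sqrt]; zify; rw [abs_mul_abs_self]; nlinarith [mul_self_nonneg b]
    have h2 : b.natAbs ≤ Nat.sqrt N := by
      rw [Nat.le_sqrt]; zify; rw [abs_mul_abs_self]; nlinarith [mul_self_nonneg a]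
    refine ⟨⟨⟨?_, ?_⟩, ?_, ?_⟩, h⟩ <;> simp only <;> omega
  · intros; rfl

lemma sqrt_bd {N : ℕ} (hN : 1 ≤ N) : (2 * (Nat.sqrt N : ℝ) + 1) ≤ 3 * Real.sqrt N := by
  have h1 : (Nat.sqrt N : ℝ) ≤ Real.sqrt N := Real.nat_sqrt_le_real_sqrt
  have h2 : 1 ≤ Real.sqrt N := by rw [Real.one_le_sqrt]; exact_mod_cast hN
  linarith

lemma gs_eq_filter {k N : ℕ} (h : k ≤ N) : gs k = (gsB N).filter (fun z => nn z = k) := by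
  ext z
  rw [mem_gs, Finset.mem_filter, mem_gsB]
  constructor
  · rintro ⟨h1, h2⟩; exact ⟨⟨h1, by omega⟩, h2⟩
  · rintro ⟨⟨h1, h2⟩, h3⟩; exact ⟨h1, h3⟩

lemma sum_gs {N : ℕ} {E : Type*} [AddCommMonoid E] (F : GaussianInt → E) :
    ∑ k ∈ Finset.Icc 1 N, ∑ z ∈ gs k, F z = ∑ z ∈ gsB N, F z := by
  rw [Finset.sum_congr rfl fun k hk => by rw [gs_eq_filter (Finset.mem_Icc.1 hk).2]]
  apply Finset.sum_fiberwise_of_maps_to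
  intro z hz
  rw [mem_gsB] at hz
  rw [Finset.mem_Icc]
  exact ⟨nn_pos (prim_ne_zero hz.1), hz.2⟩

lemma card_gsB {N : ℕ} (hN : 1 ≤ N) : ((gsB N).card : ℝ) ≤ 9 * N := by
  have h := sum_gsB N (fun _ => 1)
  simp only [Finset.sum_const, nsmul_eq_mul, mul_one] at h
  have h2 : ‖((gsB N).card : ℂ)‖ ≤ (2 * (Nat.sqrt N : ℝ) + 1) * (2 * (Nat.sqrt N : ℝ) + 1) := by
    rw [h]
    have hc : ((Finset.Icc (-(Nat.sqrt N) : ℤ) (Nat.sqrt N)).card : ℝ) = 2 * (Nat.sqrt N : ℝ) + 1 := by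
      rw [Int.card_Icc]
      have : ((Nat.sqrt N : ℤ) + 1 - -(Nat.sqrt N : ℤ)).toNat = 2 * Nat.sqrt N + 1 := by omega
      rw [this]; push_cast; ring
    refine (norm_sum_le_of_le (f := _) (n := fun _ => 2 * (Nat.sqrt N : ℝ) + 1) _ fun a _ => ?_).trans ?_
    · refine (norm_sum_le_of_le (n := fun _ => (1:ℝ)) _ fun b _ => ?_).trans ?_
      · split_ifs <;> simp
      · rw [Finset.sum_const, hc.symm]; simp
    · rw [Finset.sum_const, nsmul_eq_mul, hc]
  rw [Complex.norm_natCast] at h2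
  have h3 := sqrt_bd hN
  have h4 : Real.sqrt N * Real.sqrt N = N := Real.mul_self_sqrt (by positivity)
  nlinarith [Nat.cast_nonneg (α := ℝ) (Nat.sqrt N)]

lemma sum_norm_aa {N : ℕ} (hN : 1 ≤ N) : ∑ k ∈ Finset.Icc 1 N, ‖aa k‖ ≤ 9 * N := by
  refine le_trans ?_ (card_gsB hN)
  have := sum_gs (N := N) (fun _ => (1:ℝ))
  rw [Finset.sum_const, nsmul_eq_mul, mul_one] at this
  rw [← this]
  refine Finset.sum_le_sum fun k _ => ?_
  unfold aa
  exact norm_sum_le_of_le _ fun z _ => (rho_norm z).le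

theorem partial_sum_bound (χ : DirichletCharacter ℂ 16) {N : ℕ} (hN : 1 ≤ N) :
    ‖∑ k ∈ Finset.Icc 1 N, χ k * aa k‖ ≤ 24 * Real.sqrt N := by
  have e1 : ∑ k ∈ Finset.Icc 1 N, χ k * aa k = ∑ z ∈ gsB N, χ (nn z) * rho z := by
    rw [← sum_gs]
    refine Finset.sum_congr rfl fun k _ => ?_
    unfold aa
    rw [Finset.mul_sum]
    refine Finset.sum_congr rfl fun z hz => ?_
    rw [(mem_gs.1 hz).2]
  rw [e1, sum_gsB]
  have hcol : ∀ a ∈ Finset.Icc (-(Nat.sqrt N) : ℤ) (Nat.sqrt N),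
      ‖∑ b ∈ Finset.Icc (-(Nat.sqrt N) : ℤ) (Nat.sqrt N),
        if prim ⟨a, b⟩ ∧ nn ⟨a, b⟩ ≤ N then χ (nn ⟨a, b⟩) * rho ⟨a, b⟩ else 0‖ ≤ 8 := by
    intro a ha
    rw [Finset.mem_Icc] at ha
    set M := Nat.sqrt (N - a.natAbs * a.natAbs) with hM
    have haN : a.natAbs * a.natAbs ≤ N := by
      rw [← Nat.le_sqrt]; omega
    let G : ℤ → ℂ := fun b => if prim ⟨a, b⟩ then χ (nn ⟨a, b⟩) * rho ⟨a, b⟩ else 0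
    have hmem : ∀ b : ℤ, nn ⟨a, b⟩ ≤ N ↔ b ∈ Finset.Icc (-M : ℤ) M := by
      intro b
      have e := nn_cast ⟨a, b⟩
      simp only at e
      rw [Finset.mem_Icc]
      have h1 : (-(M:ℤ) ≤ b ∧ b ≤ M) ↔ b.natAbs ≤ M := by omega
      rw [h1, hM, Nat.le_sqrt]
      have h2 : nn ⟨a, b⟩ = a.natAbs * a.natAbs + b.natAbs * b.natAbs := by
        zify; rw [abs_mul_abs_self, abs_mul_abs_self, e]
      omega
    have e2 : (∑ b ∈ Finset.Icc (-(Nat.sqrt N) : ℤ) (Nat.sqrt N),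
        if prim ⟨a, b⟩ ∧ nn ⟨a, b⟩ ≤ N then χ (nn ⟨a, b⟩) * rho ⟨a, b⟩ else 0)
        = ∑ b ∈ Finset.Icc (-M : ℤ) M, G b := by
      symm
      have hMN : M ≤ Nat.sqrt N := Nat.sqrt_le_sqrt (Nat.sub_le _ _)
      apply Finset.sum_subset_zero_on_sdiff
      · apply Finset.Icc_subset_Icc <;> omega
      · intro b hb
        rw [Finset.mem_sdiff] at hb
        rw [if_neg]
        rw [hmem]
        exact fun h => hb.2 h.2
      · intro b hb
        rw [← hmem] at hb
        simp only [G, hb, and_true]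
    rw [e2, sum_Icc_eq]
    apply antiper_sum
    · intro b
      have hp4 : prim ⟨a, b + 4⟩ ↔ prim ⟨a, b⟩ := by
        unfold prim
        simp only [Int.cast_add]
        have : ((4:ℤ) : ZMod 4) = 0 := by decide
        rw [this, add_zero]
      simp only [G, hp4]
      split_ifs with h
      · obtain ⟨m, t, h1, h2⟩ := (prim_iff _).1 h
        simp only at h1 h2
        have e3 : ((nn ⟨a, b + 4⟩ : ℕ) : ZMod 16) = ((nn ⟨a, b⟩ : ℕ) : ZMod 16) := by
          have e4 : ((nn ⟨a, b + 4⟩ : ℤ)) = (nn ⟨a, b⟩ : ℤ) + 16 * (m + 1) := by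
            rw [nn_cast, nn_cast]; simp only [h2]; ring
          have e5 := congrArg (fun x : ℤ => (x : ZMod 16)) e4
          push_cast at e5
          have : (16 : ZMod 16) = 0 := by decide
          rw [this, zero_mul, add_zero] at e5
          exact e5
        rw [e3]
        unfold rho
        simp only [h2]
        have e6 : (2 * m + 4) / 2 = m + 2 := by omega
        have e7 : 2 * m / 2 = m := by omega
        rw [e6, e7, zpow_add₀ Complex.I_ne_zero]
        have : Complex.I ^ (2:ℤ) = -1 := by
          have := Complex.I_sq
          exact_mod_cast this
        rw [this]; ring
      · simp
    · intro b
      simp only [G]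
      split_ifs
      · rw [norm_mul, rho_norm, mul_one]; exact DirichletCharacter.norm_le_one _ _
      · simp
  refine (norm_sum_le_of_le _ hcol).trans ?_
  rw [Finset.sum_const, nsmul_eq_mul, Int.card_Icc]
  have : ((Nat.sqrt N : ℤ) + 1 - -(Nat.sqrt N : ℤ)).toNat = 2 * Nat.sqrt N + 1 := by omega
  rw [this]
  have := sqrt_bd hN
  push_cast
  linarith

end QD

end

section
namespace QD

open MeasureTheory Topology in
theorem extend_LSeries (f : ℕ → ℂ) (C : ℝ)
    (hO : ∀ N : ℕ, 1 ≤ N → ‖∑ k ∈ Finset.Icc 1 N, f k‖ ≤ C * Real.sqrt N)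
    (hS : ∀ s : ℂ, 1 < s.re → LSeriesSummable f s) :
    ∃ L : ℂ → ℂ, DifferentiableOn ℂ L {s | 1 / 2 < s.re} ∧
      ∀ s : ℂ, 1 < s.re → L s = LSeries f s := by
  let P : ℝ → ℂ := (Set.Ioi (1:ℝ)).indicator (fun t => ∑ k ∈ Finset.Icc 1 ⌊t⌋₊, f k)
  have hC : 0 ≤ C := by
    have := (norm_nonneg _).trans (hO 1 le_rfl)
    simpa using this
  have hP : ∀ t : ℝ, ‖P t‖ ≤ C * Real.sqrt |t| := by
    intro t
    by_cases ht : t ∈ Set.Ioi (1:ℝ)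
    · have ht1 : (1:ℝ) < t := ht
      simp only [P, Set.indicator_of_mem ht]
      refine (hO _ ((Nat.one_le_floor_iff t).2 ht1.le)).trans ?_
      gcongr
      exact (Nat.floor_le (by linarith)).trans (le_abs_self t)
    · simp only [P, Set.indicator_of_notMem ht, norm_zero]; positivity
  have hPm : Measurable P := by
    refine Measurable.indicator ?_ measurableSet_Ioi
    exact (measurable_from_nat (f := fun n => ∑ k ∈ Finset.Icc 1 n, f k)).comp Nat.measurable_floor
  have hPl : LocallyIntegrableOn P (Set.Ioi 0) := by
    have hc : Continuous fun t : ℝ => C * Real.sqrt |t| := by fun_prop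
    refine LocallyIntegrable.locallyIntegrableOn ?_ _
    refine (hc.locallyIntegrable (μ := volume)).mono hPm.aestronglyMeasurable ?_
    refine Eventually.of_forall fun t => (hP t).trans (Real.le_norm_self _)
  refine ⟨fun s => s * mellin P (-s), ?_, ?_⟩
  · intro s hs
    have hs' : 1 / 2 < s.re := hs
    apply DifferentiableAt.differentiableWithinAt
    have hd : DifferentiableAt ℂ (mellin P) (-s) := by
      refine mellin_differentiableAt_of_isBigO_rpow (a := -(1/2)) (b := (-s).re - 1) hPl ?_ ?_ ?_ ?_
      · refine Asymptotics.IsBigO.of_bound C ?_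
        filter_upwards [eventually_gt_atTop 0] with t ht
        rw [Real.norm_of_nonneg (by positivity), neg_neg, ← Real.sqrt_eq_rpow]
        simpa [abs_of_pos ht] using hP t
      · simp only [Complex.neg_re]; linarith
      · refine Asymptotics.IsBigO.of_bound 0 ?_
        have : Set.Iio (1:ℝ) ∈ 𝓝[>] (0:ℝ) := mem_nhdsWithin_of_mem_nhds (Iio_mem_nhds one_pos)
        filter_upwards [this] with t ht
        have ht' : t ∉ Set.Ioi (1:ℝ) := by simp only [Set.mem_Ioi, not_lt]; exact ht.le
        simp only [P, Set.indicator_of_notMem ht', norm_zero, zero_mul, le_refl]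
      · simp
    have h2 : DifferentiableAt ℂ (fun s => mellin P (-s)) s := by
      change DifferentiableAt ℂ (mellin P ∘ fun s => -s) s
      exact hd.comp s (by fun_prop)
    exact differentiableAt_id.mul h2
  · intro s hs
    have hb : (fun n : ℕ ↦ ∑ k ∈ Finset.Icc 1 n, f k) =O[atTop] fun n ↦ (n : ℝ) ^ (1/2 : ℝ) := by
      refine Asymptotics.IsBigO.of_bound C ?_
      filter_upwards [eventually_ge_atTop 1] with n hn
      rw [← Real.sqrt_eq_rpow, Real.norm_of_nonneg (by positivity)]
      exact hO n hn
    rw [LSeries_eq_mul_integral f (by norm_num) (by linarith : (1/2:ℝ) < s.re) (hS s hs) hb]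
    beta_reduce
    congr 1
    unfold mellin
    have : ∀ t : ℝ, (t:ℂ) ^ (-s - 1) • P t = (Set.Ioi (1:ℝ)).indicator
        (fun t : ℝ => (∑ k ∈ Finset.Icc 1 ⌊t⌋₊, f k) * (t:ℂ) ^ (-(s + 1))) t := by
      intro t
      by_cases ht : t ∈ Set.Ioi (1:ℝ)
      · simp only [P, Set.indicator_of_mem ht, smul_eq_mul]
        rw [mul_comm]; congr 2; ring
      · simp only [P, Set.indicator_of_notMem ht, smul_zero]
    rw [setIntegral_congr_fun measurableSet_Ioi (fun t _ => this t), setIntegral_indicator measurableSet_Ioi]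
    congr 2
    ext t
    simp only [Set.mem_inter_iff, Set.mem_Ioi]
    exact ⟨fun h => h.2, fun h => ⟨by linarith, h⟩⟩

open Topology in
theorem nonvanish (L Bf : ℂ → ℂ) (hL : DifferentiableOn ℂ L {s | 1 / 2 < s.re})
    (hne : ∃ s : ℂ, 1 < s.re ∧ L s ≠ 0)
    (hd : ∀ s : ℂ, 1 < s.re → deriv L s = - (L s * Bf s))
    (K : ℝ) (hB : ∀ s : ℂ, 1 ≤ s.re → ∀ ε : ℝ, 0 < ε → ε ≤ 1 → ‖Bf (s + ε)‖ ≤ (1/2) / ε + K) :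
    ∀ s : ℂ, 1 ≤ s.re → L s ≠ 0 := by
  intro s₀ hs₀ hzero
  have hopen : IsOpen {s : ℂ | 1 / 2 < s.re} := isOpen_lt continuous_const Complex.continuous_re
  have han : AnalyticOnNhd ℂ L {s | 1 / 2 < s.re} := hL.analyticOnNhd hopen
  have hmem : s₀ ∈ {s : ℂ | 1 / 2 < s.re} := by
    show 1 / 2 < s₀.re; linarith
  have hpre : IsPreconnected {s : ℂ | 1 / 2 < s.re} := (convex_halfSpace_re_gt _).isPreconnected
  have hnz : ¬ ∀ᶠ z in 𝓝 s₀, L z = 0 := by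
    intro h
    have h2 := han.eqOn_zero_of_preconnected_of_eventuallyEq_zero hpre hmem h
    obtain ⟨s, hs, hs'⟩ := hne
    exact hs' (h2 (show 1 / 2 < s.re by linarith))
  obtain ⟨m, g, hg, hg0, heq⟩ := ((han s₀ hmem).exists_eventuallyEq_pow_smul_nonzero_iff).2 hnz
  have hm : 1 ≤ m := by
    rcases Nat.eq_zero_or_pos m with h | h
    · exfalso
      subst h
      have := heq.self_of_nhds
      rw [hzero] at this
      simp at this
      exact hg0 this.symm
    · exact h
  -- the path s₀ + ε
  have hpath : Tendsto (fun ε : ℝ => s₀ + (ε:ℂ)) (𝓝[>] 0) (𝓝 s₀) := by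
    have : Continuous fun ε : ℝ => s₀ + (ε:ℂ) := by fun_prop
    have h := this.tendsto 0
    simp only [Complex.ofReal_zero, add_zero] at h
    exact h.mono_left nhdsWithin_le_nhds
  have hev : ∀ᶠ z in 𝓝 s₀, g z ≠ 0 ∧ deriv L z = m * (z - s₀) ^ (m - 1) * g z + (z - s₀) ^ m * deriv g z
      ∧ L z = (z - s₀) ^ m * g z := by
    filter_upwards [hg.continuousAt.eventually_ne hg0, heq.eventually_nhds, heq,
      hg.eventually_analyticAt] with z h1 h2 h3 h4
    refine ⟨h1, ?_, h3⟩
    have h5 : L =ᶠ[𝓝 z] fun z => (z - s₀) ^ m * g z := h2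
    rw [h5.deriv_eq]
    have h6 : HasDerivAt (fun z => (z - s₀) ^ m) (m * (z - s₀) ^ (m - 1) * 1) z :=
      ((hasDerivAt_id z).sub_const s₀).pow m
    have h7 := h6.mul h4.differentiableAt.hasDerivAt
    have := h7.deriv
    simp only [mul_one] at this
    exact this
  have hlim : Tendsto (fun ε : ℝ => ‖(m:ℂ) + ε * (deriv g (s₀ + ε) / g (s₀ + ε))‖) (𝓝[>] 0) (𝓝 m) := by
    have h1 : Tendsto (fun z => deriv g z / g z) (𝓝 s₀) (𝓝 (deriv g s₀ / g s₀)) :=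
      (hg.deriv.continuousAt.div hg.continuousAt hg0)
    have h2 := h1.comp hpath
    have h3 : Tendsto (fun ε : ℝ => (ε:ℂ)) (𝓝[>] 0) (𝓝 0) := by
      have := (Complex.continuous_ofReal.tendsto 0).mono_left (nhdsWithin_le_nhds (s := Set.Ioi (0:ℝ)))
      simpa using this
    have h4 := ((h3.mul h2).const_add (m:ℂ)).norm
    simpa using h4
  have hlim2 : Tendsto (fun ε : ℝ => (1/2 : ℝ) + ε * K) (𝓝[>] 0) (𝓝 (1/2)) := by
    have : Continuous fun ε : ℝ => (1/2 : ℝ) + ε * K := by fun_prop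
    have h := this.tendsto 0
    simp only [zero_mul, add_zero] at h
    exact h.mono_left nhdsWithin_le_nhds
  have hle : ∀ᶠ ε : ℝ in 𝓝[>] 0, ‖(m:ℂ) + ε * (deriv g (s₀ + ε) / g (s₀ + ε))‖ ≤ (1/2 : ℝ) + ε * K := by
    have h1 : Set.Iio (1:ℝ) ∈ 𝓝[>] (0:ℝ) := mem_nhdsWithin_of_mem_nhds (Iio_mem_nhds one_pos)
    filter_upwards [hpath.eventually hev, self_mem_nhdsWithin, h1] with ε ⟨hg1, hd1, hL1⟩ hε hε1
    have hε0 : 0 < ε := hε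
    have hεc : (ε:ℂ) ≠ 0 := by exact_mod_cast hε0.ne'
    have hre : 1 < (s₀ + ε).re := by simp; linarith
    have h2 := hd _ hre
    rw [hd1, hL1] at h2
    simp only [add_sub_cancel_left] at h2
    obtain ⟨k, rfl⟩ : ∃ k, m = k + 1 := ⟨m - 1, by omega⟩
    have h3 : ((k + 1 : ℕ):ℂ) + ε * (deriv g (s₀ + ε) / g (s₀ + ε)) = - (ε * Bf (s₀ + ε)) := by
      have hk : (ε:ℂ) ^ k ≠ 0 := pow_ne_zero _ hεc
      field_simp
      simp only [Nat.add_sub_cancel] at h2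
      apply mul_left_cancel₀ hk
      linear_combination h2
    rw [h3, norm_neg, norm_mul, Complex.norm_real, Real.norm_of_nonneg hε0.le]
    have h4 := hB s₀ hs₀ ε hε0 (le_of_lt hε1)
    calc ε * ‖Bf (s₀ + ε)‖ ≤ ε * ((1/2) / ε + K) := by gcongr
      _ = _ := by field_simp
  have := le_of_tendsto_of_tendsto hlim hlim2 hle
  have h1 : (1:ℝ) ≤ m := by exact_mod_cast hm
  linarith

end QD

end

section
namespace QD

open ArithmeticFunction in
/-- the non-prime part of the von Mangoldt function -/
noncomputable def lamNP (n : ℕ) : ℝ := if n.Prime then 0 else vonMangoldt n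

open ArithmeticFunction in
lemma lamNP_nonneg (n : ℕ) : 0 ≤ lamNP n := by
  unfold lamNP; split_ifs
  · exact le_rfl
  · exact vonMangoldt_nonneg

open ArithmeticFunction in
lemma summable_lamNP : Summable fun n : ℕ => lamNP n / n := by
  refine (vonMangoldt.summable_residueClass_non_primes_div (1 : ZMod 1)).congr fun n => ?_
  unfold lamNP
  split_ifs
  · rfl
  · have : vonMangoldt.residueClass (1 : ZMod 1) n = vonMangoldt n := by
      apply Set.indicator_of_mem
      show (n : ZMod 1) = 1
      exact Subsingleton.elim _ _
    rw [this]

open ArithmeticFunction in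
lemma summable_lam {x : ℝ} (hx : 1 < x) : Summable fun n : ℕ => vonMangoldt n / (n:ℝ) ^ x := by
  have h := (LSeriesSummable_vonMangoldt (s := (x:ℂ)) (by simpa using hx)).norm
  refine h.congr fun n => ?_
  rw [LSeries.norm_term_eq]
  split_ifs with hn
  · simp [hn]
  · rw [Complex.norm_real, Real.norm_of_nonneg vonMangoldt_nonneg, Complex.ofReal_re]

open ArithmeticFunction in
lemma summable_rc {q : ℕ} (a : ZMod q) {x : ℝ} (hx : 1 < x) :
    Summable fun n : ℕ => vonMangoldt.residueClass a n / (n:ℝ) ^ x := by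
  refine (summable_lam hx).of_nonneg_of_le (fun n => ?_) fun n => ?_
  · have := vonMangoldt.residueClass_nonneg a n; positivity
  · have := vonMangoldt.residueClass_le a n
    gcongr

open ArithmeticFunction Complex in
lemma rc_upper : ∃ K : ℝ, ∀ ε : ℝ, 0 < ε → ε ≤ 1 →
    ∑' n : ℕ, vonMangoldt.residueClass (1 : ZMod 8) n / (n:ℝ) ^ (1 + ε) ≤ (1/4) / ε + K := by
  have ha : IsUnit (1 : ZMod 8) := isUnit_one
  have H {x : ℝ} (hx : 1 < x) :
      ∑' n, vonMangoldt.residueClass (1 : ZMod 8) n / (n : ℝ) ^ x =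
        (vonMangoldt.LFunctionResidueClassAux (1 : ZMod 8) x).re + ((Nat.totient 8 : ℕ) : ℝ)⁻¹ / (x - 1) := by
    refine ofReal_injective ?_
    simp only [ofReal_tsum, ofReal_div, ofReal_cpow (Nat.cast_nonneg _), ofReal_natCast,
      ofReal_add, ofReal_inv, ofReal_sub, ofReal_one]
    simp_rw [← vonMangoldt.LFunctionResidueClassAux_real ha hx,
      vonMangoldt.eqOn_LFunctionResidueClassAux ha <| Set.mem_ofPred.mpr (ofReal_re x ▸ hx), sub_add_cancel,
      LSeries, LSeries.term]
    refine tsum_congr fun n ↦ ?_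
    split_ifs with hn
    · simp only [hn, vonMangoldt.residueClass_apply_zero, ofReal_zero, zero_div]
    · rfl
  have hc : ContinuousOn (fun x : ℝ ↦ (vonMangoldt.LFunctionResidueClassAux (1 : ZMod 8) x).re) (Set.Icc 1 2) :=
    continuous_re.continuousOn.comp (t := Set.univ) (vonMangoldt.continuousOn_LFunctionResidueClassAux (1 : ZMod 8))
      (fun ⦃x⦄ a ↦ trivial) |>.comp continuous_ofReal.continuousOn fun x hx ↦ by
        simpa only [Set.mem_ofPred_eq, ofReal_re] using hx.1
  obtain ⟨C, hC⟩ := bddAbove_def.mp <| IsCompact.bddAbove_image isCompact_Icc hc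
  refine ⟨C, fun ε h0 h1 => ?_⟩
  rw [H (by linarith)]
  have h2 := hC _ (Set.mem_image_of_mem _ (show (1 + ε) ∈ Set.Icc (1:ℝ) 2 from ⟨by linarith, by linarith⟩))
  have h3 : ((Nat.totient 8 : ℕ) : ℝ)⁻¹ / (1 + ε - 1) = (1/4) / ε := by
    have : Nat.totient 8 = 4 := by decide
    rw [this]; norm_num
  rw [h3]; linarith

open ArithmeticFunction in
lemma chi_bb_le (χ : DirichletCharacter ℂ 16) (n : ℕ) :
    ‖χ n * bb n‖ ≤ 2 * vonMangoldt.residueClass (1 : ZMod 8) n + 2 * lamNP n := by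
  have h1 : ‖χ n * bb n‖ ≤ ‖bb n‖ := by
    rw [norm_mul]
    have := DirichletCharacter.norm_le_one χ (n : ZMod 16)
    nlinarith [norm_nonneg (bb n)]
  refine h1.trans ?_
  have h2 := bb_bound n
  have h3 := vonMangoldt.residueClass_nonneg (1 : ZMod 8) n
  have h4 := lamNP_nonneg n
  by_cases hp : n.Prime
  · by_cases h8 : n % 8 = 1
    · have : vonMangoldt.residueClass (1 : ZMod 8) n = vonMangoldt n := by
        apply Set.indicator_of_mem
        show (n : ZMod 8) = 1
        have : (n : ZMod 8) = (1 : ℕ) := by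
          rw [ZMod.natCast_eq_natCast_iff]; exact h8
        simpa using this
      rw [this]; linarith
    · rw [bb_prime_zero hp h8, norm_zero]; linarith
  · have : lamNP n = vonMangoldt n := if_neg hp
    rw [this] at h4 ⊢; linarith

open ArithmeticFunction in
lemma chi_bb_le' (χ : DirichletCharacter ℂ 16) (n : ℕ) : ‖χ n * bb n‖ ≤ 2 * vonMangoldt n := by
  have h1 : ‖χ n * bb n‖ ≤ ‖bb n‖ := by
    rw [norm_mul]
    have := DirichletCharacter.norm_le_one χ (n : ZMod 16)
    nlinarith [norm_nonneg (bb n)]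
  exact h1.trans (bb_bound n)

open ArithmeticFunction in
lemma summable_chi_bb (χ : DirichletCharacter ℂ 16) {s : ℂ} (hs : 1 < s.re) :
    LSeriesSummable (fun n => χ n * bb n) s := by
  refine Summable.of_norm_bounded ((summable_lam hs).mul_left 2) fun n => ?_
  rw [LSeries.norm_term_eq]
  split_ifs with hn
  · simp [hn]
  · rw [← mul_div_assoc]
    gcongr
    exact chi_bb_le' χ n

lemma B_bound (χ : DirichletCharacter ℂ 16) : ∃ K : ℝ, ∀ s : ℂ, 1 ≤ s.re → ∀ ε : ℝ, 0 < ε → ε ≤ 1 →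
    ‖LSeries (fun n => χ n * bb n) (s + ε)‖ ≤ (1/2) / ε + K := by
  obtain ⟨K, hK⟩ := rc_upper
  refine ⟨2 * K + 2 * ∑' n : ℕ, lamNP n / n, fun s hs ε h0 h1 => ?_⟩
  have hre : 1 < (s + ε).re := by simp; linarith
  have hsum1 := (summable_rc (1 : ZMod 8) (show (1:ℝ) < 1 + ε by linarith)).mul_left 2
  have hsum2 := summable_lamNP.mul_left 2
  have hterm : ∀ n : ℕ, ‖LSeries.term (fun n => χ n * bb n) (s + ε) n‖ ≤
      2 * (ArithmeticFunction.vonMangoldt.residueClass (1 : ZMod 8) n / (n:ℝ) ^ (1 + ε)) + 2 * (lamNP n / n) := by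
    intro n
    rw [LSeries.norm_term_eq]
    split_ifs with hn
    · simp [hn]
    · have hn1 : (1:ℝ) ≤ n := by exact_mod_cast Nat.one_le_iff_ne_zero.2 hn
      have h2 := chi_bb_le χ n
      have h3 := ArithmeticFunction.vonMangoldt.residueClass_nonneg (1 : ZMod 8) n
      have h4 := lamNP_nonneg n
      have e1 : (n:ℝ) ^ (1 + ε) ≤ (n:ℝ) ^ (s + ε).re := by
        apply Real.rpow_le_rpow_of_exponent_le hn1; simp; exact hs
      have e2 : (n:ℝ) ≤ (n:ℝ) ^ (1 + ε) := by
        conv_lhs => rw [← Real.rpow_one (n:ℝ)]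
        apply Real.rpow_le_rpow_of_exponent_le hn1; linarith
      calc ‖χ n * bb n‖ / (n:ℝ) ^ (s + ε).re
          ≤ (2 * ArithmeticFunction.vonMangoldt.residueClass (1 : ZMod 8) n + 2 * lamNP n) / (n:ℝ) ^ (1 + ε) := by
            gcongr
        _ = 2 * (ArithmeticFunction.vonMangoldt.residueClass (1 : ZMod 8) n / (n:ℝ) ^ (1 + ε))
            + 2 * (lamNP n / (n:ℝ) ^ (1 + ε)) := by ring
        _ ≤ _ := by gcongr
  have hb := tsum_of_norm_bounded (hsum1.add hsum2).hasSum hterm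
  have e : LSeries (fun n => χ n * bb n) (s + ε) = ∑' n, LSeries.term (fun n => χ n * bb n) (s + ε) n := rfl
  rw [e]
  refine hb.trans ?_
  rw [hsum1.tsum_add hsum2, tsum_mul_left, tsum_mul_left]
  have := hK ε h0 h1
  have e2 : (1/2 : ℝ) / ε = 2 * ((1/4) / ε) := by ring
  rw [e2]; linarith

lemma summable_chi_aa (χ : DirichletCharacter ℂ 16) {s : ℂ} (hs : 1 < s.re) :
    LSeriesSummable (fun n => χ n * aa n) s := by
  refine LSeriesSummable_of_sum_norm_bigO (r := 1) ?_ zero_le_one hs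
  refine Asymptotics.IsBigO.of_bound 9 ?_
  filter_upwards [eventually_ge_atTop 1] with N hN
  rw [Real.rpow_one, Real.norm_of_nonneg (by positivity), Real.norm_of_nonneg (by positivity)]
  refine le_trans (Finset.sum_le_sum fun k _ => ?_) (sum_norm_aa hN)
  rw [norm_mul]
  have := DirichletCharacter.norm_le_one χ (k : ZMod 16)
  nlinarith [norm_nonneg (aa k)]

lemma absc_aa (χ : DirichletCharacter ℂ 16) :
    LSeries.abscissaOfAbsConv (fun n => χ n * aa n) ≤ (1:ℝ) :=
  LSeries.abscissaOfAbsConv_le_of_forall_lt_LSeriesSummable fun y hy =>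
    summable_chi_aa χ (by simpa using hy)

lemma deriv_rel (χ : DirichletCharacter ℂ 16) {s : ℂ} (hs : 1 < s.re) :
    deriv (LSeries (fun n => χ n * aa n)) s =
      - (LSeries (fun n => χ n * aa n) s * LSeries (fun n => χ n * bb n) s) := by
  have hab : LSeries.abscissaOfAbsConv (fun n => χ n * aa n) < s.re :=
    (absc_aa χ).trans_lt (by exact_mod_cast hs)
  rw [LSeries_deriv hab, mul_comm, ← LSeries_convolution' (summable_chi_bb χ hs) (summable_chi_aa χ hs)]
  congr 1
  refine LSeries_congr (fun {n} hn => ?_) s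
  rw [LSeries.convolution_def]
  simp only [LSeries.logMul]
  have h := conv_ab (Nat.one_le_iff_ne_zero.2 hn)
  rw [Complex.natCast_log] at h
  have : ∑ p ∈ n.divisorsAntidiagonal, χ p.1 * bb p.1 * (χ p.2 * aa p.2) =
      χ n * ∑ p ∈ n.divisorsAntidiagonal, bb p.1 * aa p.2 := by
    rw [Finset.mul_sum]
    refine Finset.sum_congr rfl fun p hp => ?_
    rw [Nat.mem_divisorsAntidiagonal] at hp
    have e : (n : ZMod 16) = (p.1 : ZMod 16) * (p.2 : ZMod 16) := by rw [← hp.1]; push_cast; rfl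
    rw [e, map_mul]; ring
  rw [this, h]; ring

theorem chi_B (χ : DirichletCharacter ℂ 16) : ∃ G : ℂ → ℂ, ContinuousOn G {s | 1 ≤ s.re} ∧
    ∀ s : ℂ, 1 < s.re → LSeries (fun n => χ n * bb n) s = G s := by
  obtain ⟨L, hL, hLe⟩ := extend_LSeries (fun n => χ n * aa n) 24
    (fun N hN => partial_sum_bound χ hN) (fun s hs => summable_chi_aa χ hs)
  have hopen1 : IsOpen {s : ℂ | 1 < s.re} := isOpen_lt continuous_const Complex.continuous_re
  have hopen : IsOpen {s : ℂ | 1 / 2 < s.re} := isOpen_lt continuous_const Complex.continuous_re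
  have hd : ∀ s : ℂ, 1 < s.re → deriv L s = - (L s * LSeries (fun n => χ n * bb n) s) := by
    intro s hs
    rw [hLe s hs, ← deriv_rel χ hs]
    apply EventuallyEq.deriv_eq
    filter_upwards [hopen1.mem_nhds hs] with z hz using hLe z hz
  have hne : ∃ s : ℂ, 1 < s.re ∧ L s ≠ 0 := by
    have hlim := LSeries.tendsto_atTop (f := fun n => χ n * aa n)
      ((absc_aa χ).trans_lt (EReal.coe_lt_top _))
    have h1 : χ ((1:ℕ) : ZMod 16) * aa 1 = 1 := by rw [aa_one]; simp
    rw [h1] at hlim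
    obtain ⟨x, hx1, hx2⟩ := ((hlim.eventually_ne one_ne_zero).and (eventually_gt_atTop 1)).exists
    exact ⟨x, by simpa using hx2, by rw [hLe _ (by simpa using hx2)]; exact hx1⟩
  obtain ⟨K, hK⟩ := B_bound χ
  have hnv := nonvanish L (LSeries (fun n => χ n * bb n)) hL hne hd K hK
  refine ⟨fun s => - (deriv L s / L s), ?_, ?_⟩
  · have hsub : {s : ℂ | 1 ≤ s.re} ⊆ {s : ℂ | 1 / 2 < s.re} := by
      intro s hs
      have : 1 ≤ s.re := hs
      show 1 / 2 < s.re
      linarith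
    have h1 : ContinuousOn (deriv L) {s : ℂ | 1 / 2 < s.re} :=
      ((hL.analyticOnNhd hopen).deriv).continuousOn
    exact ((h1.mono hsub).div (hL.continuousOn.mono hsub) (fun s hs => hnv s hs)).neg
  · intro s hs
    beta_reduce
    rw [hd s hs]
    have := hnv s hs.le
    field_simp

end QD

end

namespace QD

open Topology

lemma lamNP_prime {p : ℕ} (hp : p.Prime) : lamNP p = 0 := by simp [lamNP, hp]
open ArithmeticFunction in
lemma lamNP_not_prime {p : ℕ} (hp : ¬ p.Prime) : lamNP p = vonMangoldt p := by simp [lamNP, hp]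

lemma term_err (e : ℕ → ℂ) (he : ∀ n, ‖e n‖ ≤ lamNP n) (s : ℂ) (hs : 1 ≤ s.re) (n : ℕ) :
    ‖LSeries.term e s n‖ ≤ lamNP n / n := by
  rw [LSeries.norm_term_eq]
  split_ifs with hn
  · simp [hn]
  · have h1 : (1:ℝ) ≤ n := by exact_mod_cast Nat.one_le_iff_ne_zero.mpr hn
    have h2 : (n:ℝ) ≤ (n:ℝ) ^ s.re := by
      conv_lhs => rw [← Real.rpow_one (n:ℝ)]
      exact Real.rpow_le_rpow_of_exponent_le h1 hs
    have := lamNP_nonneg n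
    exact div_le_div₀ this (he n) (by linarith) h2

lemma err_cont (e : ℕ → ℂ) (he : ∀ n, ‖e n‖ ≤ lamNP n) :
    ContinuousOn (LSeries e) {s | 1 ≤ s.re} := by
  refine continuousOn_tsum (u := fun n : ℕ => lamNP n / n) (fun n => ?_) summable_lamNP
    fun n s hs => term_err e he s hs n
  rcases eq_or_ne n 0 with rfl | hn
  · simp only [LSeries.term_zero]; exact continuousOn_const
  · simp only [LSeries.term_of_ne_zero hn]
    refine Continuous.continuousOn ?_
    have hn' : (n:ℂ) ≠ 0 := by exact_mod_cast hn
    refine continuous_const.div (continuous_id.const_cpow (Or.inl hn')) fun s => ?_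
    simp [Complex.cpow_eq_zero_iff, hn']

lemma err_summable (e : ℕ → ℂ) (he : ∀ n, ‖e n‖ ≤ lamNP n) (s : ℂ) (hs : 1 < s.re) :
    LSeriesSummable e s :=
  Summable.of_norm_bounded summable_lamNP fun n => term_err e he s hs.le n

open ArithmeticFunction in
lemma rc_LSS {q : ℕ} (a : ZMod q) (s : ℂ) (hs : 1 < s.re) :
    LSeriesSummable (fun n => (vonMangoldt.residueClass a n : ℂ)) s := by
  refine Summable.of_norm_bounded (summable_rc a hs) fun n => ?_
  rw [LSeries.norm_term_eq]
  split_ifs with hn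
  · simp [hn]
  · rw [Complex.norm_real, Real.norm_of_nonneg (vonMangoldt.residueClass_nonneg a n)]

/-- the set of primes of the statement -/
def SS (p : ℕ) : Prop := p.Prime ∧ p % 16 = 1 ∧ ¬ ∃ x : ZMod p, x ^ 4 = 2

open scoped Classical in
noncomputable def uu (n : ℕ) : ℝ := if SS n then Real.log n else 0

open scoped Classical in
noncomputable def uP (n : ℕ) : ℝ := if n.Prime then Real.log n else 0

open ArithmeticFunction in
noncomputable def ee (n : ℕ) : ℂ :=
  (uu n : ℂ) - ((1/2 : ℂ) * (vonMangoldt.residueClass (1 : ZMod 16) n : ℂ)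
    + (-1/32 : ℂ) * ∑ χ : DirichletCharacter ℂ 16, χ n * bb n)

lemma sum_chi (n : ℕ) : ∑ χ : DirichletCharacter ℂ 16, χ n * bb n =
    if n % 16 = 1 then 8 * bb n else 0 := by
  have h := DirichletCharacter.sum_char_inv_mul_char_eq ℂ (n := 16) (a := 1) isUnit_one (n : ZMod 16)
  have hinv : (1 : ZMod 16)⁻¹ = 1 := ZMod.inv_one 16
  simp only [hinv, map_one, one_mul] at h
  rw [← Finset.sum_mul, h]
  have h16 : Nat.totient 16 = 8 := by decide
  have h1 : (1 : ZMod 16) = (n : ZMod 16) ↔ n % 16 = 1 := by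
    have : (1 : ZMod 16) = ((1:ℕ) : ZMod 16) := by simp
    rw [this, ZMod.natCast_eq_natCast_iff']
    omega
  simp only [h1, h16]
  split_ifs <;> simp

open ArithmeticFunction in
lemma rc_eq (n : ℕ) : vonMangoldt.residueClass (1 : ZMod 16) n =
    if n % 16 = 1 then vonMangoldt n else 0 := by
  have h1 : (n : ZMod 16) = 1 ↔ n % 16 = 1 := by
    have : (1 : ZMod 16) = ((1:ℕ) : ZMod 16) := by simp
    rw [this, ZMod.natCast_eq_natCast_iff']
  simp only [vonMangoldt.residueClass, Set.indicator]
  congr 1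
  exact propext h1

open ArithmeticFunction in
lemma ee_bound (n : ℕ) : ‖ee n‖ ≤ lamNP n := by
  unfold ee
  rw [sum_chi, rc_eq]
  by_cases hp : n.Prime
  · rw [lamNP_prime hp]
    by_cases h : n % 16 = 1
    · rw [if_pos h, if_pos h, bb_prime hp, aa_prime hp (by omega), vonMangoldt_apply_prime hp]
      unfold uu SS
      by_cases hx : ∃ x : ZMod n, x ^ 4 = 2
      · rw [if_pos hx, if_neg (by tauto)]
        have : ((0:ℝ):ℂ) - (1 / 2 * (Real.log n : ℂ) + -1 / 32 * (8 * (2 * (Real.log n : ℂ)))) = 0 := by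
          push_cast; ring
        rw [this]; simp
      · rw [if_neg hx, if_pos (by tauto)]
        have : ((Real.log n:ℝ):ℂ) - (1 / 2 * (Real.log n : ℂ) + -1 / 32 * (8 * (-2 * (Real.log n : ℂ)))) = 0 := by
          ring
        rw [this]; simp
    · rw [if_neg h, if_neg h]
      unfold uu SS
      rw [if_neg (by tauto)]; simp
  · rw [lamNP_not_prime hp]
    have hu : uu n = 0 := by unfold uu SS; rw [if_neg (by tauto)]
    have hL : 0 ≤ vonMangoldt n := vonMangoldt_nonneg
    rw [hu]
    split_ifs with h
    · have hb := bb_bound n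
      calc _ = ‖-((1 / 2 : ℂ) * (vonMangoldt n : ℂ)) + (1 / 4 : ℂ) * bb n‖ := by
            congr 1; push_cast; ring
        _ ≤ ‖-((1 / 2 : ℂ) * (vonMangoldt n : ℂ))‖ + ‖(1 / 4 : ℂ) * bb n‖ := norm_add_le _ _
        _ = 1 / 2 * vonMangoldt n + 1 / 4 * ‖bb n‖ := by
            rw [norm_neg, norm_mul, norm_mul, Complex.norm_real, Real.norm_of_nonneg hL]
            norm_num
        _ ≤ _ := by linarith
    · simp

open ArithmeticFunction in
lemma uu_le (n : ℕ) : uu n ≤ vonMangoldt n := by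
  unfold uu
  split_ifs with h
  · rw [vonMangoldt_apply_prime h.1]
  · exact vonMangoldt_nonneg

open ArithmeticFunction in
lemma uP_le (n : ℕ) : uP n ≤ vonMangoldt n := by
  unfold uP
  split_ifs with h
  · rw [vonMangoldt_apply_prime h]
  · exact vonMangoldt_nonneg

lemma uu_nonneg (n : ℕ) : 0 ≤ uu n := by
  unfold uu
  split_ifs
  · exact Real.log_natCast_nonneg n
  · exact le_rfl

lemma uP_nonneg (n : ℕ) : 0 ≤ uP n := by
  unfold uP
  split_ifs
  · exact Real.log_natCast_nonneg n
  · exact le_rfl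

open ArithmeticFunction in
lemma cheb (u : ℕ → ℝ) (hu : ∀ n, u n ≤ vonMangoldt n) (n : ℕ) :
    ∑ k ∈ Finset.Icc 1 n, u k ≤ (Real.log 4 + 4) * n := by
  refine (Finset.sum_le_sum fun k _ => hu k).trans ?_
  have h := Chebyshev.psi_le_const_mul_self (x := n) (Nat.cast_nonneg n)
  unfold Chebyshev.psi at h
  rw [Nat.floor_natCast] at h
  exact h

open ArithmeticFunction in
theorem theta_S : Tendsto (fun n : ℕ => (∑ k ∈ Finset.Icc 1 n, uu k) / n) atTop (𝓝 (1/16)) := by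
  choose G hG1 hG2 using chi_B
  refine wiener_ikehara uu uu_nonneg _ (cheb uu uu_le) (1/16)
    (fun s => (1/2 : ℂ) * vonMangoldt.LFunctionResidueClassAux (1 : ZMod 16) s
      + (-1/32 : ℂ) * ∑ χ : DirichletCharacter ℂ 16, G χ s + LSeries ee s) ?_ ?_
  · refine ((continuousOn_const.mul (vonMangoldt.continuousOn_LFunctionResidueClassAux (1 : ZMod 16))).add
      (continuousOn_const.mul (continuousOn_finsetSum _ fun χ _ => hG1 χ))).add (err_cont ee ee_bound)
  · intro s hs
    have h1 := rc_LSS (1 : ZMod 16) s hs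
    have h2 : ∀ χ ∈ (Finset.univ : Finset (DirichletCharacter ℂ 16)),
      LSeriesSummable (fun n => χ n * bb n) s := fun χ _ => summable_chi_bb χ hs
    have h2' := LSeriesSummable.sum h2
    have h3 := err_summable ee ee_bound s hs
    have key : (fun n => (uu n : ℂ)) =
        (1/2 : ℂ) • (fun n => (vonMangoldt.residueClass (1 : ZMod 16) n : ℂ))
        + (-1/32 : ℂ) • (∑ χ : DirichletCharacter ℂ 16, fun n : ℕ => χ n * bb n) + ee := by
      funext n
      simp only [Pi.add_apply, Pi.smul_apply, Finset.sum_apply, smul_eq_mul, ee]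
      ring
    have haux := vonMangoldt.eqOn_LFunctionResidueClassAux (q := 16) (a := 1) isUnit_one
      (show s ∈ {s : ℂ | 1 < s.re} from hs)
    have h16 : Nat.totient 16 = 8 := by decide
    rw [h16] at haux
    rw [key, LSeries_add ((h1.smul _).add (h2'.smul _)) h3, LSeries_add (h1.smul _) (h2'.smul _),
      LSeries_smul, LSeries_smul, LSeries_sum h2, haux,
      Finset.sum_congr rfl (fun χ _ => hG2 χ s hs)]
    push_cast
    ring

open ArithmeticFunction in
theorem theta_P : Tendsto (fun n : ℕ => (∑ k ∈ Finset.Icc 1 n, uP k) / n) atTop (𝓝 1) := by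
  have hrc (n : ℕ) : vonMangoldt.residueClass (1 : ZMod 1) n = vonMangoldt n := by
      apply Set.indicator_of_mem
      show (n : ZMod 1) = 1
      exact Subsingleton.elim _ _
  have hb : ∀ n, ‖(-(lamNP n : ℂ))‖ ≤ lamNP n := fun n => by
    rw [norm_neg, Complex.norm_real, Real.norm_of_nonneg (lamNP_nonneg n)]
  refine wiener_ikehara uP uP_nonneg _ (cheb uP uP_le) 1
    (fun s => vonMangoldt.LFunctionResidueClassAux (1 : ZMod 1) s
      + LSeries (fun n => -(lamNP n : ℂ)) s) ?_ ?_
  · exact (vonMangoldt.continuousOn_LFunctionResidueClassAux (1 : ZMod 1)).add (err_cont _ hb)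
  · intro s hs
    have h1 := rc_LSS (1 : ZMod 1) s hs
    have h3 := err_summable _ hb s hs
    have key : (fun n => (uP n : ℂ)) =
        (fun n => (vonMangoldt.residueClass (1 : ZMod 1) n : ℂ)) + fun n => -(lamNP n : ℂ) := by
      funext n
      simp only [Pi.add_apply, hrc, uP]
      by_cases hp : n.Prime
      · rw [lamNP_prime hp, if_pos hp, vonMangoldt_apply_prime hp]; simp
      · rw [lamNP_not_prime hp, if_neg hp]; simp
    have haux := vonMangoldt.eqOn_LFunctionResidueClassAux (q := 1) (a := 1) isUnit_one
      (show s ∈ {s : ℂ | 1 < s.re} from hs)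
    rw [Nat.totient_one] at haux
    rw [key, LSeries_add h1 h3, haux]
    push_cast
    ring

/-- number of elements up to `n` satisfying `P` -/
noncomputable def cnt (P : ℕ → Prop) (n : ℕ) : ℕ := by
  classical exact ((Finset.Icc 1 n).filter P).card

lemma card_eq_cnt (P : ℕ → Prop) (h0 : ¬ P 0) (n : ℕ) :
    Nat.card {p : ℕ | p ≤ n ∧ P p} = cnt P n := by
  classical
  have : {p : ℕ | p ≤ n ∧ P p} = ((Finset.Icc 1 n).filter P : Finset ℕ) := by
    ext p
    simp only [Set.mem_ofPred_eq, Finset.coe_filter, Finset.mem_Icc]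
    refine ⟨fun h => ⟨⟨?_, h.1⟩, h.2⟩, fun h => ⟨h.1.2, h.2⟩⟩
    rcases Nat.eq_zero_or_pos p with rfl | h'
    · exact absurd h.2 h0
    · exact h'
  rw [this, Nat.card_coe_set_eq, Set.ncard_coe_finset]
  unfold cnt
  congr

lemma cnt_log (n : ℕ) : (cnt SS n : ℝ) * Real.log n - ∑ k ∈ Finset.Icc 1 n, uu k =
    ∑ k ∈ Finset.Icc 1 n, (by classical exact if SS k then Real.log n - Real.log k else 0) := by
  classical
  unfold cnt uu
  rw [Finset.card_filter]
  push_cast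
  rw [Finset.sum_mul, ← Finset.sum_sub_distrib]
  refine Finset.sum_congr rfl fun k _ => ?_
  by_cases h : SS k <;> simp [h]

lemma cnt_log_P (n : ℕ) : (cnt Nat.Prime n : ℝ) * Real.log n - ∑ k ∈ Finset.Icc 1 n, uP k =
    ∑ k ∈ Finset.Icc 1 n, (by classical exact if Nat.Prime k then Real.log n - Real.log k else 0) := by
  classical
  unfold cnt uP
  rw [Finset.card_filter]
  push_cast
  rw [Finset.sum_mul, ← Finset.sum_sub_distrib]
  refine Finset.sum_congr rfl fun k _ => ?_
  by_cases h : Nat.Prime k <;> simp [h]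

lemma log_diff {n k : ℕ} (hk : k ∈ Finset.Icc 1 n) : 0 ≤ Real.log n - Real.log k := by
  rw [Finset.mem_Icc] at hk
  have : (0:ℝ) < k := by exact_mod_cast hk.1
  have := Real.log_le_log this (by exact_mod_cast hk.2 : (k:ℝ) ≤ n)
  linarith

lemma diff_P : Tendsto (fun n : ℕ =>
    ((cnt Nat.Prime n : ℝ) * Real.log n - ∑ k ∈ Finset.Icc 1 n, uP k) / n) atTop (𝓝 0) := by
  obtain ⟨c, hc⟩ := Chebyshev.primeCounting_sub_theta_div_log_isBigO.bound
  have hc' := tendsto_natCast_atTop_atTop (R := ℝ) |>.eventually hc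
  have hlog : Tendsto (fun n : ℕ => c * (Real.log n)⁻¹) atTop (𝓝 0) := by
    have := (Real.tendsto_log_atTop.comp (tendsto_natCast_atTop_atTop (R := ℝ))).inv_tendsto_atTop.const_mul c
    simpa using this
  refine squeeze_zero_norm' ?_ hlog
  filter_upwards [hc', eventually_ge_atTop 2] with n hn h2
  have hl : 0 < Real.log n := Real.log_pos (by exact_mod_cast h2)
  have hn0 : (0:ℝ) < n := by positivity
  have e1 : Nat.primeCounting ⌊(n:ℝ)⌋₊ = cnt Nat.Prime n := by
    rw [Nat.floor_natCast, Nat.primeCounting, Nat.primeCounting', Nat.count_eq_card_filter_range]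
    unfold cnt
    congr 1
    ext p
    simp only [Finset.mem_filter, Finset.mem_range, Finset.mem_Icc]
    constructor
    · rintro ⟨h, hp⟩; exact ⟨⟨hp.pos, by omega⟩, hp⟩
    · rintro ⟨h, hp⟩; exact ⟨by omega, hp⟩
  have e2 : Chebyshev.theta n = ∑ k ∈ Finset.Icc 1 n, uP k := by
    unfold Chebyshev.theta uP
    rw [Nat.floor_natCast, Finset.sum_filter]
    rfl
  rw [e1, e2] at hn
  have e3 : ((cnt Nat.Prime n : ℝ) * Real.log n - ∑ k ∈ Finset.Icc 1 n, uP k) / n =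
      ((cnt Nat.Prime n : ℝ) - (∑ k ∈ Finset.Icc 1 n, uP k) / Real.log n) * (Real.log n / n) := by
    field_simp
  rw [e3, norm_mul, Real.norm_of_nonneg (by positivity : 0 ≤ Real.log n / n)]
  calc _ ≤ (c * ‖(n:ℝ) / Real.log n ^ 2‖) * (Real.log n / n) := by gcongr
    _ = _ := by
      rw [Real.norm_of_nonneg (by positivity)]
      field_simp

lemma diff_S : Tendsto (fun n : ℕ =>
    ((cnt SS n : ℝ) * Real.log n - ∑ k ∈ Finset.Icc 1 n, uu k) / n) atTop (𝓝 0) := by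
  classical
  refine squeeze_zero (fun n => ?_) (fun n => ?_) diff_P
  · rw [cnt_log]
    refine div_nonneg (Finset.sum_nonneg fun k hk => ?_) (Nat.cast_nonneg n)
    split_ifs
    · exact log_diff hk
    · exact le_rfl
  · rw [cnt_log, cnt_log_P]
    gcongr with k hk
    have := log_diff hk
    by_cases h : SS k
    · rw [if_pos h, if_pos h.1]
    · rw [if_neg h]; split_ifs
      · exact this
      · exact le_rfl

lemma final : Tendsto (fun n : ℕ => (cnt SS n : ℝ) / cnt Nat.Prime n) atTop (𝓝 (1/16)) := by
  have h1 := (diff_S.add theta_S).div (diff_P.add theta_P) (by norm_num)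
  have e : ((0:ℝ) + 1/16) / (0 + 1) = 1/16 := by norm_num
  rw [e] at h1
  refine h1.congr' ?_
  filter_upwards [eventually_ge_atTop 2] with n h2
  have hl : 0 < Real.log n := Real.log_pos (by exact_mod_cast h2)
  have hn0 : (0:ℝ) < n := by positivity
  simp only [Pi.div_apply]
  rw [← add_div, ← add_div, sub_add_cancel, sub_add_cancel, div_div_div_cancel_right₀ hn0.ne',
    mul_div_mul_right _ _ hl.ne']

end QD

/-- The set of primes `p ≡ 1 (mod 16)` such that `2` is not a fourth
power modulo `p` has natural density `1/16` in the set of all primes. -/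
theorem density_of_primes_one_mod_sixteen_two_not_fourth_power :
    Tendsto
      (fun X : ℕ =>
        (Nat.card {p : ℕ | p ≤ X ∧ p.Prime ∧ p % 16 = 1 ∧
            ¬ ∃ x : ZMod p, x ^ 4 = 2} : ℝ) /
          (Nat.card {p : ℕ | p ≤ X ∧ p.Prime} : ℝ))
      atTop (nhds (1 / 16)) := by
  refine QD.final.congr fun n => ?_
  have h1 := QD.card_eq_cnt QD.SS (by simp [QD.SS]) n
  have h2 := QD.card_eq_cnt Nat.Prime Nat.not_prime_zero n
  rw [← h1, ← h2]
  rfl
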